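/- Let u ∈ BV(Ω) with Ω ⊂ ℝ^N open. If the characteristic function χ_{{u > t}} is a function of least gradient in Ω for almost every t ∈ ℝ, then u is a function of least gradient in Ω. -/

import Mathlib

open MeasureTheory Metric Set Bornology Filter
open scoped ENNReal NNReal RealInnerProductSpace Topology

noncomputable section

abbrev Euc (N : ℕ) := EuclideanSpace ℝ (Fin N)

def divg {N : ℕ} (z : Euc N → Euc N) (x : Euc N) : ℝ :=
  ∑ i : Fin N, fderiv ℝ z x (EuclideanSpace.single i 1) i

def polarFn {N : ℕ} (φ : Euc N → Euc N → ℝ) (x zs : Euc N) : ℝ :=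
  sSup {r : ℝ | ∃ ξ, φ x ξ ≤ 1 ∧ r = ⟪zs, ξ⟫}

def phiTV {N : ℕ} (φ : Euc N → Euc N → ℝ) (Ω : Set (Euc N)) (u : Euc N → ℝ) : ℝ≥0∞ :=
  ⨆ (z : Euc N → Euc N) (_ : ContDiff ℝ 1 z) (_ : HasCompactSupport z)
    (_ : tsupport z ⊆ Ω) (_ : ∀ x, polarFn φ x (z x) ≤ 1),
    ENNReal.ofReal (∫ x in Ω, u x * divg z x)

def TV {N : ℕ} (Ω : Set (Euc N)) (u : Euc N → ℝ) : ℝ≥0∞ :=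
  ⨆ (z : Euc N → Euc N) (_ : ContDiff ℝ 1 z) (_ : HasCompactSupport z)
    (_ : tsupport z ⊆ Ω) (_ : ∀ x, ‖z x‖ ≤ 1),
    ENNReal.ofReal (∫ x in Ω, u x * divg z x)

def MetricIntegrand {N : ℕ} (φ : Euc N → Euc N → ℝ) (Ω : Set (Euc N)) (lam Lam : ℝ) : Prop :=
  ContinuousOn (fun p : Euc N × Euc N => φ p.1 p.2) (closure Ω ×ˢ univ) ∧
  (∀ x ∈ closure Ω, ConvexOn ℝ univ (φ x)) ∧
  (∀ x ∈ closure Ω, ∀ (t : ℝ) (ξ : Euc N), φ x (t • ξ) = |t| * φ x ξ) ∧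
  0 < lam ∧ 0 < Lam ∧
  (∀ x ∈ closure Ω, ∀ ξ : Euc N, lam * ‖ξ‖ ≤ φ x ξ ∧ φ x ξ ≤ Lam * ‖ξ‖)

def HasLipschitzBoundary {N : ℕ} (Ω : Set (Euc N)) : Prop :=
  ∀ x ∈ frontier Ω, ∃ (ν : Euc N) (U : Set (Euc N)) (g : Euc N → ℝ) (L : ℝ≥0),
    ‖ν‖ = 1 ∧ IsOpen U ∧ x ∈ U ∧ LipschitzWith L g ∧
    ∀ y ∈ U, (y ∈ Ω ↔ g (y - ⟪y, ν⟫ • ν) < ⟪y, ν⟫)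

def IsTrace {N : ℕ} (Ω : Set (Euc N)) (u f : Euc N → ℝ) : Prop :=
  ∀ᵐ x ∂((μH[(N : ℝ) - 1] : Measure (Euc N)).restrict (frontier Ω)),
    Filter.Tendsto (fun r : ℝ => ⨍ y in ball x r ∩ Ω, |u y - f x| ∂volume)
      (𝓝[>] (0:ℝ)) (𝓝 0)

def IsLeastGradient {N : ℕ} (Ω : Set (Euc N)) (u : Euc N → ℝ) : Prop :=
  ∀ v : Euc N → ℝ, HasCompactSupport v → tsupport v ⊆ Ω → TV Ω u ≤ TV Ω (u + v)

def IsPhiLeastGradient {N : ℕ} (φ : Euc N → Euc N → ℝ) (Ω : Set (Euc N)) (u : Euc N → ℝ) : Prop :=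
  ∀ v : Euc N → ℝ, HasCompactSupport v → tsupport v ⊆ Ω → phiTV φ Ω u ≤ phiTV φ Ω (u + v)

def IsLeastGradientLoc {N : ℕ} (Ω : Set (Euc N)) (u : Euc N → ℝ) : Prop :=
  ∀ v : Euc N → ℝ, HasCompactSupport v → tsupport v ⊆ Ω →
    ∀ U : Set (Euc N), IsOpen U → Bornology.IsBounded U → tsupport v ⊆ U → U ⊆ Ω →
      TV U u ≤ TV U (u + v)

def Perim {N : ℕ} (E U : Set (Euc N)) : ℝ≥0∞ :=
  TV U (E.indicator (fun _ => (1:ℝ)))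

/-- Functionals on `L^q` of a finite measure are represented by an integrable density,
at least on bounded functions. -/
theorem lp_dual_repr {α : Type*} [MeasurableSpace α] (μ : Measure α) [IsFiniteMeasure μ]
    (q : ℝ≥0∞) [Fact (1 ≤ q)] (hq : q ≠ ∞) (l : Lp ℝ q μ →L[ℝ] ℝ) :
    ∃ v : α → ℝ, Integrable v μ ∧ ∀ (f : α → ℝ) (hf : MemLp f q μ), Measurable f →
      (∃ c, ∀ x, |f x| ≤ c) → l (hf.toLp f) = ∫ x, v x * f x ∂μ := by
  classical
  let m : Set α → ℝ := fun A =>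
    if hA : MeasurableSet A then l (indicatorConstLp q hA (measure_ne_top μ A) (1:ℝ)) else 0
  have hm : ∀ A (hA : MeasurableSet A),
      m A = l (indicatorConstLp q hA (measure_ne_top μ A) (1:ℝ)) := fun A hA => dif_pos hA
  have hfin : ∀ (s : Finset ℕ) (f : ℕ → Set α), (∀ i, MeasurableSet (f i)) →
      Pairwise (Function.onFun Disjoint f) → ∑ i ∈ s, m (f i) = m (⋃ i ∈ s, f i) := by
    intro s f hf hd
    induction s using Finset.induction_on with
    | empty => 
      simp only [Finset.sum_empty, Finset.notMem_empty, iUnion_of_empty, iUnion_empty]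
      rw [hm _ MeasurableSet.empty]
      simp
    | insert a s has ih =>
      rw [Finset.sum_insert has, ih]
      have hU : MeasurableSet (⋃ i ∈ s, f i) := Finset.measurableSet_biUnion _ (fun i _ => hf i)
      have hdj : Disjoint (f a) (⋃ i ∈ s, f i) := by
        simp only [disjoint_iUnion_right]
        intro i hi
        exact hd (fun h => has (h ▸ hi))
      have e : (⋃ i ∈ insert a s, f i) = f a ∪ ⋃ i ∈ s, f i := by simp
      rw [e, hm _ ((hf a).union hU), hm _ (hf a), hm _ hU,
        indicatorConstLp_disjoint_union (hf a) hU (measure_ne_top _ _) (measure_ne_top _ _) hdj,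
        map_add]
  let s : SignedMeasure α :=
    { measureOf' := m
      empty' := by rw [hm _ MeasurableSet.empty]; simp
      not_measurable' := fun A hA => dif_neg hA
      m_iUnion' := by
        intro f hf hd
        unfold HasSum
        simp only [hfin _ f hf hd, SummationFilter.unconditional_filter]
        have hU : MeasurableSet (⋃ i, f i) := MeasurableSet.iUnion hf
        have hUs : ∀ s : Finset ℕ, MeasurableSet (⋃ i ∈ s, f i) :=
          fun s => Finset.measurableSet_biUnion _ (fun i _ => hf i)
        simp only [hm _ hU, hm _ (hUs _)]
        refine (l.continuous.tendsto _).comp (tendsto_indicatorConstLp_set hq ?_)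
        have h1 : ∀ s : Finset ℕ, symmDiff (⋃ i ∈ s, f i) (⋃ i, f i) = (⋃ i, f i) \ ⋃ i ∈ s, f i := by
          intro s
          have : (⋃ i ∈ s, f i) ⊆ ⋃ i, f i := iUnion₂_subset (fun i _ => subset_iUnion f i)
          rw [Set.symmDiff_def, Set.sdiff_eq_empty.2 this, empty_union]
        simp only [h1]
        have h2 := tendsto_measure_iInter_atTop (μ := μ)
          (s := fun s : Finset ℕ => (⋃ i, f i) \ ⋃ i ∈ s, f i)
          (fun s => (hU.diff (hUs s)).nullMeasurableSet) ?_ ⟨∅, measure_ne_top _ _⟩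
        · have h3 : (⋂ s : Finset ℕ, ((⋃ i, f i) \ ⋃ i ∈ s, f i)) = ∅ := ?_
          · rw [h3, measure_empty] at h2
            exact h2
          ext x
          simp only [mem_iInter, Set.mem_sdiff, mem_iUnion, mem_empty_iff_false, iff_false]
          intro h
          obtain ⟨⟨i, hi⟩, -⟩ := h ∅
          exact (h {i}).2 ⟨i, by simp, hi⟩
        · intro s t hst
          apply sdiff_subset_sdiff_right
          exact biUnion_subset_biUnion_left hst }
  have hsA : ∀ A (hA : MeasurableSet A),
      s A = l (indicatorConstLp q hA (measure_ne_top μ A) (1:ℝ)) := hm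
  have hac : s ≪ᵥ μ.toENNRealVectorMeasure := by
    refine VectorMeasure.AbsolutelyContinuous.mk ?_
    intro A hA h0
    rw [Measure.toENNRealVectorMeasure_apply_measurable hA] at h0
    rw [hsA A hA]
    have : indicatorConstLp q hA (measure_ne_top μ A) (1:ℝ) = 0 := by
      rw [Lp.eq_zero_iff_ae_eq_zero]
      filter_upwards [indicatorConstLp_coeFn (p := q) (hs := hA) (hμs := measure_ne_top μ A)
        (c := (1:ℝ)), measure_eq_zero_iff_ae_notMem.1 h0] with x hx hx2
      simp [hx, hx2]
    rw [this, map_zero]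
  obtain ⟨v, hvi, hvA⟩ : ∃ v, Integrable v μ ∧ ∀ A (hA : MeasurableSet A),
      l (indicatorConstLp q hA (measure_ne_top μ A) (1:ℝ)) = ∫ x in A, v x ∂μ := by
    refine ⟨s.rnDeriv μ, SignedMeasure.integrable_rnDeriv s μ, fun A hA => ?_⟩
    rw [← hsA A hA, ← withDensityᵥ_apply (SignedMeasure.integrable_rnDeriv s μ) hA,
      SignedMeasure.withDensityᵥ_rnDeriv_eq s μ hac]
  clear hsA hac
  clear s
  clear hfin hm
  clear m
  -- simple functions
  have hbd : ∀ g : SimpleFunc α ℝ, ∃ c, ∀ x, ‖g x‖ ≤ c := fun g => g.exists_forall_norm_le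
  have hInt : ∀ g : SimpleFunc α ℝ, Integrable (fun x => v x * g x) μ := by
    intro g
    obtain ⟨c, hc⟩ := hbd g
    exact hvi.mul_bdd (c := c) g.measurable.aestronglyMeasurable (ae_of_all _ hc)
  have hsimple : ∀ (g : SimpleFunc α ℝ) (hg : MemLp g q μ), l (hg.toLp g) = ∫ x, v x * g x ∂μ := by
    intro g
    induction g using SimpleFunc.induction with
    | const c hA =>
      rename_i A
      intro hg
      have e : hg.toLp _ = c • indicatorConstLp q hA (measure_ne_top μ A) (1:ℝ) := by
        rw [indicatorConstLp, ← MemLp.toLp_const_smul]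
        refine MemLp.toLp_congr _ _ (ae_of_all _ fun x => ?_)
        by_cases hx : x ∈ A <;> simp [hx]
      rw [e, map_smul, hvA, ← integral_indicator hA, smul_eq_mul, ← integral_const_mul]
      refine integral_congr_ae (ae_of_all _ fun x => ?_)
      by_cases hx : x ∈ A
      · simp [hx, mul_comm c]
      · simp [hx]
    | add hd hf hg =>
      rename_i f g
      intro hfg
      have h1 : MemLp f q μ := f.memLp_of_isFiniteMeasure q μ
      have h2 : MemLp g q μ := g.memLp_of_isFiniteMeasure q μ
      have e : hfg.toLp _ = h1.toLp f + h2.toLp g := by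
        rw [← MemLp.toLp_add]
        rfl
      rw [e, map_add, hf h1, hg h2, ← integral_add (hInt f) (hInt g)]
      congr 1
      ext x
      simp [mul_add]
  refine ⟨v, hvi, ?_⟩
  intro f hf hfm ⟨c, hc⟩
  have hfi : MemLp f q μ := hf
  let a : ℕ → (SimpleFunc α ℝ) := SimpleFunc.approxOn f hfm univ 0 (mem_univ _)
  have ha : ∀ n, MemLp (a n) q μ := fun n => (a n).memLp_of_isFiniteMeasure q μ
  have t1 : Tendsto (fun n => (ha n).toLp (a n)) atTop (𝓝 (hf.toLp f)) := by
    rw [Lp.tendsto_Lp_iff_tendsto_eLpNorm'']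
    apply SimpleFunc.tendsto_approxOn_Lp_eLpNorm hfm (mem_univ _) hq
    · simp
    · simpa using hf.2
  have t2 : Tendsto (fun n => l ((ha n).toLp (a n))) atTop (𝓝 (l (hf.toLp f))) :=
    (l.continuous.tendsto _).comp t1
  have t3 : Tendsto (fun n => ∫ x, v x * a n x ∂μ) atTop (𝓝 (∫ x, v x * f x ∂μ)) := by
    apply tendsto_integral_of_dominated_convergence (fun x => ‖v x‖ * (c + c))
    · intro n; exact (hInt (a n)).1
    · exact hvi.norm.mul_const _
    · intro n
      refine ae_of_all _ fun x => ?_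
      rw [norm_mul]
      gcongr
      refine (SimpleFunc.norm_approxOn_zero_le hfm (mem_univ _) x n).trans ?_
      exact add_le_add (hc x) (hc x)
    · refine ae_of_all _ fun x => ?_
      refine Tendsto.const_mul _ ?_
      exact SimpleFunc.tendsto_approxOn hfm (mem_univ _) (by simp)
  simp only [fun n => hsimple (a n) (ha n)] at t2
  exact tendsto_nhds_unique t2 t3

theorem divg_add {N : ℕ} {z w : Euc N → Euc N} {x : Euc N} (hz : DifferentiableAt ℝ z x)
    (hw : DifferentiableAt ℝ w x) : divg (fun y => z y + w y) x = divg z x + divg w x := by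
  unfold divg
  rw [fderiv_fun_add hz hw, ← Finset.sum_add_distrib]
  simp

theorem divg_smul {N : ℕ} {z : Euc N → Euc N} {x : Euc N} (hz : DifferentiableAt ℝ z x)
    (c : ℝ) : divg (fun y => c • z y) x = c * divg z x := by
  unfold divg
  rw [fderiv_fun_const_smul hz, Finset.mul_sum]
  simp

theorem euc_sum_single {N : ℕ} (y : Euc N) :
    ∑ i : Fin N, y i • (EuclideanSpace.single i (1:ℝ) : Euc N) = y := by
  have := (EuclideanSpace.basisFun (Fin N) ℝ).sum_repr y
  simpa using this

theorem clm_sum_single {N : ℕ} (L : Euc N →L[ℝ] ℝ) (y : Euc N) :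
    ∑ i : Fin N, L (EuclideanSpace.single i 1) * y i = L y := by
  conv_rhs => rw [← euc_sum_single y]
  rw [map_sum]
  refine Finset.sum_congr rfl fun i _ => ?_
  rw [map_smul, smul_eq_mul, mul_comm]

theorem divg_fun_smul {N : ℕ} {z : Euc N → Euc N} {f : Euc N → ℝ} {x : Euc N}
    (hz : DifferentiableAt ℝ z x) (hf : DifferentiableAt ℝ f x) :
    divg (fun y => f y • z y) x = f x * divg z x + fderiv ℝ f x (z x) := by
  unfold divg
  rw [fderiv_fun_smul hf hz, Finset.mul_sum, ← clm_sum_single (fderiv ℝ f x) (z x),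
    ← Finset.sum_add_distrib]
  simp

theorem fderiv_coord {N : ℕ} {z : Euc N → Euc N} {x : Euc N} (hz : DifferentiableAt ℝ z x)
    (i : Fin N) (v : Euc N) : fderiv ℝ (fun y => z y i) x v = fderiv ℝ z x v i := by
  have h := ((EuclideanSpace.proj i : Euc N →L[ℝ] ℝ).hasFDerivAt.comp x hz.hasFDerivAt).fderiv
  have h2 : (⇑(EuclideanSpace.proj i : Euc N →L[ℝ] ℝ) ∘ z) = fun y => z y i := rfl
  rw [h2] at h
  rw [h]
  rfl

theorem divg_coord {N : ℕ} {z : Euc N → Euc N} {x : Euc N} (hz : DifferentiableAt ℝ z x) :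
    divg z x = ∑ i : Fin N, fderiv ℝ (fun y => z y i) x (EuclideanSpace.single i 1) := by
  unfold divg
  exact Finset.sum_congr rfl fun i _ => (fderiv_coord hz i _).symm

/-- The divergence as a continuous linear function of the derivative. -/
def trL (N : ℕ) : (Euc N →L[ℝ] Euc N) →L[ℝ] ℝ :=
  ∑ i : Fin N, (EuclideanSpace.proj i : Euc N →L[ℝ] ℝ).comp
    (ContinuousLinearMap.apply ℝ (Euc N) (EuclideanSpace.single i (1:ℝ)))

theorem divg_eq_trL {N : ℕ} (z : Euc N → Euc N) (x : Euc N) : divg z x = trL N (fderiv ℝ z x) := by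
  simp [divg, trL]

theorem divg_contDiff {N : ℕ} {z : Euc N → Euc N} (hz : ContDiff ℝ 2 z) :
    ContDiff ℝ 1 (divg z) := by
  have : divg z = fun x => trL N (fderiv ℝ z x) := funext fun x => divg_eq_trL z x
  rw [this]
  exact (trL N).contDiff.comp (hz.fderiv_right (m := 1) (by norm_num))

theorem divg_continuous {N : ℕ} {z : Euc N → Euc N} (hz : ContDiff ℝ 1 z) :
    Continuous (divg z) := by
  have : divg z = fun x => trL N (fderiv ℝ z x) := funext fun x => divg_eq_trL z x
  rw [this]
  exact (trL N).continuous.comp (hz.continuous_fderiv one_ne_zero)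

theorem divg_eq_zero {N : ℕ} {z : Euc N → Euc N} {x : Euc N} (hx : x ∉ tsupport z) :
    divg z x = 0 := by
  rw [divg_eq_trL]
  have : fderiv ℝ z x = 0 := by
    by_contra h
    exact hx (support_fderiv_subset ℝ h)
  rw [this, map_zero]

theorem divg_hasCompactSupport {N : ℕ} {z : Euc N → Euc N} (hz : HasCompactSupport z) :
    HasCompactSupport (divg z) :=
  hz.mono' (fun x hx => by
    by_contra h
    exact hx (divg_eq_zero h))

theorem integral_mul_divg {N : ℕ} {z : Euc N → Euc N} {G : Euc N → ℝ} (hz : ContDiff ℝ 1 z)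
    (hzc : HasCompactSupport z) (hG : ContDiff ℝ 1 G) :
    ∫ x, G x * divg z x = - ∫ x, fderiv ℝ G x (z x) := by
  have hzi : ∀ i, ContDiff ℝ 1 (fun y => z y i) := fun i =>
    (EuclideanSpace.proj i : Euc N →L[ℝ] ℝ).contDiff.comp hz
  have hzic : ∀ i, HasCompactSupport (fun y => z y i) := fun i =>
    hzc.comp_left (g := fun y : Euc N => y i) (by simp)
  have hd : Differentiable ℝ z := hz.differentiable one_ne_zero
  have hGf : ∀ v, Continuous fun x => fderiv ℝ G x v := fun v =>
    (hG.continuous_fderiv one_ne_zero).clm_apply continuous_const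
  have hzf : ∀ i, ∀ v, Continuous fun x => fderiv ℝ (fun y => z y i) x v := fun i v =>
    ((hzi i).continuous_fderiv one_ne_zero).clm_apply continuous_const
  have i1 : ∀ i : Fin N, Integrable (fun x =>
      G x * fderiv ℝ (fun y => z y i) x (EuclideanSpace.single i 1)) := by
    intro i
    refine (hG.continuous.mul (hzf i _)).integrable_of_hasCompactSupport ?_
    exact (((hzic i).fderiv ℝ).comp_left (g := fun L : Euc N →L[ℝ] ℝ => L _) (by simp)).mul_left
  have i2 : ∀ i : Fin N, Integrable (fun x =>
      fderiv ℝ G x (EuclideanSpace.single i 1) * z x i) := by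
    intro i
    exact ((hGf _).mul (hzi i).continuous).integrable_of_hasCompactSupport (hzic i).mul_left
  have i3 : ∀ i : Fin N, Integrable (fun x => G x * z x i) := by
    intro i
    exact (hG.continuous.mul (hzi i).continuous).integrable_of_hasCompactSupport (hzic i).mul_left
  have e1 : (fun x => G x * divg z x) = fun x => ∑ i : Fin N,
      G x * fderiv ℝ (fun y => z y i) x (EuclideanSpace.single i 1) := by
    ext x
    rw [divg_coord (hd x), Finset.mul_sum]
  have e2 : (fun x => fderiv ℝ G x (z x)) = fun x => ∑ i : Fin N,
      fderiv ℝ G x (EuclideanSpace.single i 1) * z x i := by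
    ext x
    rw [clm_sum_single]
  rw [e1, e2, integral_finsetSum _ (fun i _ => i1 i), integral_finsetSum _ (fun i _ => i2 i),
    ← Finset.sum_neg_distrib]
  refine Finset.sum_congr rfl fun i _ => ?_
  exact integral_mul_fderiv_eq_neg_fderiv_mul_of_integrable (i2 i) (i1 i) (i3 i)
    (fun x _ => hG.differentiable one_ne_zero x) (fun x _ => (hzi i).differentiable one_ne_zero x)

theorem integral_divg {N : ℕ} {z : Euc N → Euc N} (hz : ContDiff ℝ 1 z)
    (hzc : HasCompactSupport z) : ∫ x, divg z x = 0 := by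
  have := integral_mul_divg (G := fun _ => 1) hz hzc contDiff_const
  simpa using this

theorem setIntegral_divg {N : ℕ} {z : Euc N → Euc N} {Ω : Set (Euc N)}
    (hzt : tsupport z ⊆ Ω) (u : Euc N → ℝ) :
    ∫ x in Ω, u x * divg z x = ∫ x, u x * divg z x := by
  refine setIntegral_eq_integral_of_forall_compl_eq_zero fun x hx => ?_
  rw [divg_eq_zero (fun h => hx (hzt h)), mul_zero]

theorem exists_cutoff {N : ℕ} {K Ω : Set (Euc N)} (hK : IsCompact K) (hΩ : IsOpen Ω)
    (hKΩ : K ⊆ Ω) : ∃ ψ : Euc N → ℝ, ContDiff ℝ 2 ψ ∧ HasCompactSupport ψ ∧ tsupport ψ ⊆ Ω ∧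
      (∀ x, 0 ≤ ψ x) ∧ (∀ x, ψ x ≤ 1) ∧ ∀ x ∈ K, ψ x = 1 := by
  obtain ⟨L, hL, hKL, hLΩ⟩ := exists_compact_between hK hΩ hKΩ
  obtain ⟨f, hf1, hf0, hf⟩ := exists_contMDiffMap_one_nhds_of_subset_interior (n := 2)
    (modelWithCornersSelf ℝ (Euc N)) hK.isClosed hKL
  have hs : tsupport f ⊆ L := by
    refine closure_minimal (fun x hx => ?_) hL.isClosed
    by_contra h
    exact hx (hf0 x h)
  refine ⟨f, f.contMDiff.contDiff, hL.of_isClosed_subset (isClosed_tsupport _) hs, hs.trans hLΩ,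
    fun x => (hf x).1, fun x => (hf x).2, fun x hx => ?_⟩
  exact hf1.self_of_nhdsSet x hx

theorem eLpNorm_comp_affine {N : ℕ} (f : Euc N → ℝ) (hf : Continuous f) (x : Euc N) {s : ℝ}
    (hs : 0 < s) :
    eLpNorm (fun y => f (x - s • y)) ((N + 1 : ℕ) : ℝ≥0∞) volume =
      ENNReal.ofReal (s ^ (-(N : ℝ) / (N + 1))) * eLpNorm f ((N + 1 : ℕ) : ℝ≥0∞) volume := by
  have hmap : Measure.map (fun y : Euc N => x - s • y) volume =
      ENNReal.ofReal ((s ^ N)⁻¹) • (volume : Measure (Euc N)) := by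
    have e : (fun y : Euc N => x - s • y) = (fun y => x - y) ∘ (fun y => s • y) := rfl
    rw [e, ← Measure.map_map (by fun_prop) (by fun_prop), Measure.map_addHaar_smul _ hs.ne',
      Measure.map_smul]
    rw [((volume : Measure (Euc N)).measurePreserving_sub_left x).map_eq]
    congr 2
    rw [finrank_euclideanSpace_fin, abs_of_nonneg (by positivity)]
  have h1 := eLpNorm_map_measure (μ := (volume : Measure (Euc N))) (g := f)
    (p := ((N + 1 : ℕ) : ℝ≥0∞))
    (f := fun y : Euc N => x - s • y) hf.aestronglyMeasurable (by fun_prop)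
  have h2 : eLpNorm (fun y => f (x - s • y)) ((N + 1 : ℕ) : ℝ≥0∞) volume =
    eLpNorm (f ∘ fun y : Euc N => x - s • y) ((N + 1 : ℕ) : ℝ≥0∞) volume := rfl
  rw [h2, ← h1, hmap, eLpNorm_smul_measure_of_ne_top (by simp), smul_eq_mul]
  congr 1
  rw [ENNReal.ofReal_rpow_of_pos (by positivity)]
  congr 1
  rw [← Real.rpow_natCast, ← Real.rpow_neg hs.le, ← Real.rpow_mul hs.le]
  congr 1
  have h3 : (((N + 1 : ℕ) : ℝ≥0∞)).toReal = (N : ℝ) + 1 := by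
    rw [ENNReal.toReal_natCast]; push_cast; rfl
  rw [one_div, ENNReal.toReal_inv, h3]
  field_simp

theorem div_inverse {N : ℕ} (hN : 0 < N) {K : Set (Euc N)} (hK : IsCompact K) :
    ∃ C : ℝ≥0, ∀ f : Euc N → ℝ, ContDiff ℝ 1 f → (∀ x, x ∉ K → f x = 0) →
      ∃ w : Euc N → Euc N, ContDiff ℝ 1 w ∧ (∀ x ∈ K, divg w x = f x) ∧
        ∀ x, ‖w x‖ₑ ≤ C * eLpNorm f ((N + 1 : ℕ) : ℝ≥0∞) volume := by
  obtain ⟨R, hR⟩ := hK.isBounded.exists_norm_le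
  set R' := max R 0 with hR'
  have hR'0 : 0 ≤ R' := le_max_right _ _
  have hRK : ∀ x ∈ K, ‖x‖ ≤ R' := fun x hx => (hR x hx).trans (le_max_left _ _)
  let y0 : Euc N := EuclideanSpace.single ⟨0, hN⟩ (2 * R' + 2)
  have hy0 : ‖y0‖ = 2 * R' + 2 := by
    simp only [y0, EuclideanSpace.norm_single]
    rw [Real.norm_of_nonneg (by positivity)]
  set B := ball y0 1 with hB
  have hBy : ∀ y ∈ B, ‖y‖ ≤ 2 * R' + 3 := by
    intro y hy
    have h1 : ‖y - y0‖ < 1 := by simpa [hB, dist_eq_norm] using hy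
    have h2 := norm_sub_norm_le y y0
    linarith
  have hBy' : ∀ y ∈ B, 2 * R' < ‖y‖ := by
    intro y hy
    have h1 : ‖y - y0‖ < 1 := by simpa [hB, dist_eq_norm] using hy
    have h2 := norm_sub_norm_le y0 y
    rw [norm_sub_rev] at h2
    linarith
  set M := 2 * R' + 3 with hM
  have hM0 : 0 < M := by positivity
  let νB : Measure (Euc N) := volume.restrict B
  let νI : Measure ℝ := volume.restrict (Ioc 0 1)
  have hBfin : volume B < ∞ := measure_ball_lt_top
  haveI : IsFiniteMeasure νB := ⟨by simpa [νB] using hBfin⟩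
  haveI : IsFiniteMeasure νI := ⟨by simp [νI]⟩
  let κ := νB.prod νI
  have hBpos : 0 < volume B := measure_ball_pos _ _ one_pos
  set c : ℝ := (volume B).toReal⁻¹ with hc
  have hκ : ∀ᵐ p ∂κ, p.1 ∈ B := by
    have : ∀ᵐ y ∂νB, y ∈ B := ae_restrict_mem measurableSet_ball
    exact Measure.quasiMeasurePreserving_fst.ae this
  set I : ℝ≥0∞ := ∫⁻ s in Ioc (0:ℝ) 1, ENNReal.ofReal (s ^ (-(N : ℝ) / (N + 1))) with hI
  have hIfin : I < ∞ := by
    have h1 : IntervalIntegrable (fun s : ℝ => s ^ (-(N : ℝ) / (N + 1))) volume 0 1 := by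
      apply intervalIntegral.intervalIntegrable_rpow'
      rw [lt_div_iff₀ (by positivity)]
      linarith
    have h2 : IntegrableOn (fun s : ℝ => s ^ (-(N : ℝ) / (N + 1))) (Ioc 0 1) volume := h1.1
    exact h2.lintegral_lt_top
  set e : ℝ := 1 / (1 : ℝ≥0∞).toReal - 1 / ((N + 1 : ℕ) : ℝ≥0∞).toReal with he
  have he0 : 0 ≤ e := by
    simp only [he, ENNReal.toReal_one, ENNReal.toReal_natCast]
    have : 1 / ((N + 1 : ℕ) : ℝ) ≤ 1 := by
      rw [div_le_one (by positivity)]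
      push_cast
      linarith [Nat.cast_nonneg (α := ℝ) N]
    linarith
  set D : ℝ≥0∞ := ‖c‖ₑ * (ENNReal.ofReal M * (I * (volume B) ^ e)) with hD
  have hDfin : D ≠ ∞ := by
    refine ENNReal.mul_ne_top (by simp) (ENNReal.mul_ne_top (by simp)
      (ENNReal.mul_ne_top hIfin.ne (ENNReal.rpow_ne_top_of_nonneg he0 hBfin.ne)))
  refine ⟨D.toNNReal, ?_⟩
  intro f hf hfK
  have hfc : HasCompactSupport f := HasCompactSupport.intro hK hfK
  obtain ⟨A, hA⟩ := hf.continuous.bounded_above_of_compact_support hfc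
  obtain ⟨A', hA'⟩ := (hf.continuous_fderiv one_ne_zero).bounded_above_of_compact_support
    (hfc.fderiv ℝ)
  let F : Euc N → (Euc N × ℝ) → Euc N := fun x p => f (x - p.2 • p.1) • p.1
  let F' : Euc N → (Euc N × ℝ) → (Euc N →L[ℝ] Euc N) := fun x p =>
    (fderiv ℝ f (x - p.2 • p.1)).smulRight p.1
  have hFc : Continuous (fun q : Euc N × (Euc N × ℝ) => F q.1 q.2) := by
    have := hf.continuous
    fun_prop
  have hfd := hf.continuous_fderiv one_ne_zero
  have hF'c : Continuous (fun q : Euc N × (Euc N × ℝ) => F' q.1 q.2) := by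
    have h1 : Continuous fun q : Euc N × (Euc N × ℝ) => fderiv ℝ f (q.1 - q.2.2 • q.2.1) :=
      hfd.comp (by fun_prop)
    exact (ContinuousLinearMap.smulRightL ℝ (Euc N) (Euc N)).continuous₂.comp
      (h1.prodMk (by fun_prop : Continuous fun q : Euc N × (Euc N × ℝ) => q.2.1))
  have hF'b : ∀ᵐ p ∂κ, ∀ x, ‖F' x p‖ ≤ A' * M := by
    filter_upwards [hκ] with p hp x
    simp only [F', ContinuousLinearMap.norm_smulRight_apply]
    exact mul_le_mul (hA' _) (hBy _ hp) (norm_nonneg _) ((norm_nonneg _).trans (hA' 0))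
  have hFb : ∀ x, ∀ᵐ p ∂κ, ‖F x p‖ ≤ A * M := by
    intro x
    filter_upwards [hκ] with p hp
    simp only [F, norm_smul]
    exact mul_le_mul (hA _) (hBy _ hp) (norm_nonneg _) ((norm_nonneg _).trans (hA 0))
  have hFm : ∀ x, AEStronglyMeasurable (F x) κ := fun x =>
    (hFc.comp (continuous_const.prodMk continuous_id)).aestronglyMeasurable
  have hF'm : ∀ x, AEStronglyMeasurable (F' x) κ := fun x =>
    (hF'c.comp (continuous_const.prodMk continuous_id)).aestronglyMeasurable
  have hFi : ∀ x, Integrable (F x) κ := fun x => Integrable.of_bound (hFm x) _ (hFb x)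
  have hF'i : ∀ x, Integrable (F' x) κ := fun x =>
    Integrable.of_bound (hF'm x) (A' * M) (by filter_upwards [hF'b] with p hp using hp x)
  let w0 : Euc N → Euc N := fun x => ∫ p, F x p ∂κ
  have hw0 : ∀ x, HasFDerivAt w0 (∫ p, F' x p ∂κ) x := by
    intro x
    refine hasFDerivAt_integral_of_dominated_of_fderiv_le (bound := fun _ => A' * M) (s := univ)
      univ_mem (Eventually.of_forall hFm) (hFi x) (hF'm x) ?_ (integrable_const _) ?_
    · filter_upwards [hF'b] with p hp x _ using hp x
    · refine ae_of_all _ fun p x _ => ?_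
      have h1 : HasFDerivAt (fun x => f (x - p.2 • p.1)) (fderiv ℝ f (x - p.2 • p.1)) x := by
        have h2 := ((hf.differentiable one_ne_zero) (x - p.2 • p.1)).hasFDerivAt
        have h3 : HasFDerivAt (fun x : Euc N => x - p.2 • p.1) (ContinuousLinearMap.id ℝ _) x :=
          (hasFDerivAt_id x).sub_const _
        have h4 := h2.comp x h3
        rw [ContinuousLinearMap.comp_id] at h4
        exact h4
      exact h1.smul_const p.1
  have hw0C : ContDiff ℝ 1 w0 := by
    rw [contDiff_one_iff_fderiv]
    refine ⟨fun x => (hw0 x).differentiableAt, ?_⟩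
    have : fderiv ℝ w0 = fun x => ∫ p, F' x p ∂κ := funext fun x => (hw0 x).fderiv
    rw [this]
    refine continuous_of_dominated (bound := fun _ => A' * M) hF'm ?_ (integrable_const _) ?_
    · intro x
      filter_upwards [hF'b] with p hp using hp x
    · exact ae_of_all _ fun p => hF'c.comp (continuous_id.prodMk continuous_const)
  have hdiv : ∀ x ∈ K, divg w0 x = (volume B).toReal * f x := by
    intro x hx
    rw [divg_eq_trL, (hw0 x).fderiv, ← ContinuousLinearMap.integral_comp_comm _ (hF'i x)]
    have htr : ∀ p, trL N (F' x p) = fderiv ℝ f (x - p.2 • p.1) p.1 := by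
      intro p
      rw [← clm_sum_single]
      simp [trL, F']
    have hInt : Integrable (fun p : Euc N × ℝ => fderiv ℝ f (x - p.2 • p.1) p.1) κ := by
      have := (trL N).integrable_comp (hF'i x)
      simpa only [htr] using this
    simp only [htr]
    rw [integral_prod _ hInt]
    have hin : ∀ y ∈ B, ∫ s, fderiv ℝ f (x - s • y) y ∂νI = f x := by
      intro y hy
      have h0 : f (x - y) = 0 := by
        apply hfK
        intro h
        have h1 := hRK _ h
        have h2 := hRK _ hx
        have h3 := hBy' y hy
        have h4 : ‖y‖ ≤ ‖x‖ + ‖x - y‖ := by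
          have : y = x - (x - y) := by abel
          calc ‖y‖ = ‖x - (x - y)‖ := by rw [← this]
            _ ≤ _ := norm_sub_le _ _
        linarith
      have hder : ∀ s : ℝ, HasDerivAt (fun s : ℝ => - f (x - s • y))
          (fderiv ℝ f (x - s • y) y) s := by
        intro s
        have h2 := ((hf.differentiable one_ne_zero) (x - s • y)).hasFDerivAt
        have h3 : HasDerivAt (fun s : ℝ => x - s • y) (-y) s := by
          simpa using ((hasDerivAt_id s).smul_const y).const_sub x
        have h4 := (h2.comp_hasDerivAt s h3).neg
        have h5 : -(fderiv ℝ f (x - s • y) (-y)) = fderiv ℝ f (x - s • y) y := by simp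
        rw [h5] at h4
        exact h4
      have hci : Continuous (fun s : ℝ => fderiv ℝ f (x - s • y) y) :=
        (hfd.comp (by fun_prop : Continuous fun s : ℝ => x - s • y)).clm_apply continuous_const
      have := intervalIntegral.integral_eq_sub_of_hasDerivAt (a := 0) (b := 1)
        (fun s _ => hder s) (hci.intervalIntegrable _ _)
      rw [intervalIntegral.integral_of_le zero_le_one] at this
      simpa [h0] using this
    have : ∫ y, ∫ s, fderiv ℝ f (x - s • y) y ∂νI ∂νB = ∫ y, f x ∂νB :=
      setIntegral_congr_fun measurableSet_ball hin
    rw [this]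
    simp [νB, Measure.real]
  refine ⟨fun x => c • w0 x, hw0C.const_smul c, ?_, ?_⟩
  · intro x hx
    rw [divg_smul (hw0 x).differentiableAt, hdiv x hx, hc, ← mul_assoc, inv_mul_cancel₀, one_mul]
    exact (ENNReal.toReal_pos hBpos.ne' hBfin.ne).ne'
  · intro x
    rw [ENNReal.coe_toNNReal hDfin, enorm_smul, hD, mul_assoc]
    gcongr
    calc ‖w0 x‖ₑ ≤ ∫⁻ p, ‖F x p‖ₑ ∂κ := enorm_integral_le_lintegral_enorm _
      _ ≤ ∫⁻ p, ENNReal.ofReal M * ‖f (x - p.2 • p.1)‖ₑ ∂κ := by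
        refine lintegral_mono_ae ?_
        filter_upwards [hκ] with p hp
        simp only [F, enorm_smul]
        rw [mul_comm]
        gcongr
        rw [← ofReal_norm_eq_enorm]
        exact ENNReal.ofReal_le_ofReal (hBy _ hp)
      _ = ENNReal.ofReal M * ∫⁻ s, ∫⁻ y, ‖f (x - s • y)‖ₑ ∂νB ∂νI := by
        have hm : Measurable fun p : Euc N × ℝ => ‖f (x - p.2 • p.1)‖ₑ :=
          (hf.continuous.comp (by fun_prop :
            Continuous fun p : Euc N × ℝ => x - p.2 • p.1)).enorm.measurable
        rw [lintegral_const_mul _ hm, lintegral_prod_symm _ hm.aemeasurable]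
      _ ≤ ENNReal.ofReal M * ∫⁻ s, (ENNReal.ofReal (s ^ (-(N : ℝ) / (N + 1))) *
          (eLpNorm f ((N + 1 : ℕ) : ℝ≥0∞) volume * (volume B) ^ e)) ∂νI := by
        gcongr 1
        refine setLIntegral_mono_ae' measurableSet_Ioc (ae_of_all _ fun s hs => ?_)
        have hcs : Continuous fun y : Euc N => f (x - s • y) :=
          hf.continuous.comp (by fun_prop)
        have h1 := eLpNorm_le_eLpNorm_mul_rpow_measure_univ (μ := νB)
          (p := 1) (q := ((N + 1 : ℕ) : ℝ≥0∞)) (by exact_mod_cast Nat.le_add_left 1 N)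
          hcs.aestronglyMeasurable
        rw [eLpNorm_one_eq_lintegral_enorm, ← he] at h1
        refine h1.trans ?_
        have h2 : eLpNorm (fun y => f (x - s • y)) ((N + 1 : ℕ) : ℝ≥0∞) νB ≤ _ :=
          eLpNorm_restrict_le _ _ volume B
        rw [eLpNorm_comp_affine f hf.continuous x hs.1] at h2
        rw [← mul_assoc]
        simp only [νB, Measure.restrict_apply_univ]
        gcongr
      _ = _ := by
        rw [lintegral_mul_const' _ _ ?_]
        · change ENNReal.ofReal M * (I * _) = _
          ring
        · refine ENNReal.mul_ne_top ?_ (ENNReal.rpow_ne_top_of_nonneg he0 hBfin.ne)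
          exact (hf.continuous.memLp_of_hasCompactSupport hfc).2.ne

open scoped Convolution

/-- Mollification of `g` by a normalized bump. -/
def moll {N : ℕ} (φ : ContDiffBump (0 : Euc N)) (g : Euc N → ℝ) : Euc N → ℝ :=
  φ.normed volume ⋆[ContinuousLinearMap.lsmul ℝ ℝ, volume] g

theorem moll_contDiff {N : ℕ} (φ : ContDiffBump (0 : Euc N)) {g : Euc N → ℝ}
    (hg : Integrable g) : ContDiff ℝ ((⊤ : ℕ∞) : WithTop ℕ∞) (moll φ g) :=
  HasCompactSupport.contDiff_convolution_left _ φ.hasCompactSupport_normed φ.contDiff_normed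
    hg.locallyIntegrable

theorem moll_div_le {N : ℕ} {Ω : Set (Euc N)} {g : Euc N → ℝ} (hg : Integrable g) {c : ℝ}
    (hc : ∀ z : Euc N → Euc N, ContDiff ℝ 2 z → HasCompactSupport z → tsupport z ⊆ Ω →
      (∀ x, ‖z x‖ ≤ 1) → ∫ x, g x * divg z x ≤ c)
    (φ : ContDiffBump (0 : Euc N)) {z : Euc N → Euc N} (hz : ContDiff ℝ 2 z)
    (hzc : HasCompactSupport z) (hzt : cthickening φ.rOut (tsupport z) ⊆ Ω)
    (hz1 : ∀ x, ‖z x‖ ≤ 1) : ∫ x, moll φ g x * divg z x ≤ c := by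
  have hd := divg_continuous (hz.of_le one_le_two)
  obtain ⟨A, hA⟩ := hd.bounded_above_of_compact_support (divg_hasCompactSupport hzc)
  have hφi : Integrable (φ.normed (volume : Measure (Euc N))) := φ.integrable_normed
  have h1 : Integrable (fun p : Euc N × Euc N =>
      (φ.normed volume p.2 * g (p.1 - p.2)) * divg z p.1) (volume.prod volume) := by
    have := Integrable.convolution_integrand (μ := (volume : Measure (Euc N)))
      (ContinuousLinearMap.lsmul ℝ ℝ) hφi hg
    refine Integrable.mul_bdd (c := A) ?_ (hd.comp continuous_fst).aestronglyMeasurable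
      (ae_of_all _ fun p => hA _)
    simpa using this
  have h2 : ∫ x, moll φ g x * divg z x =
      ∫ x, ∫ y, (φ.normed volume y * g (x - y)) * divg z x := by
    refine integral_congr_ae (ae_of_all _ fun x => ?_)
    simp only [moll, convolution_def, ContinuousLinearMap.lsmul_apply, smul_eq_mul]
    rw [integral_mul_const]
  rw [h2, integral_integral_swap h1]
  have h3 : ∀ y, ∫ x, (φ.normed volume y * g (x - y)) * divg z x ≤ φ.normed volume y * c := by
    intro y
    have e1 : ∫ x, (φ.normed volume y * g (x - y)) * divg z x =
        φ.normed volume y * ∫ x, g (x - y) * divg z x := by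
      rw [← integral_const_mul]
      simp only [mul_assoc]
    rw [e1]
    by_cases hy : φ.normed volume y = 0
    · rw [hy]; simp
    have hyn : ‖y‖ < φ.rOut := by
      have : y ∈ Function.support (φ.normed volume) := hy
      rw [φ.support_normed_eq] at this
      simpa using this
    refine mul_le_mul_of_nonneg_left ?_ (φ.nonneg_normed y)
    have e2 : ∫ x, g (x - y) * divg z x = ∫ x, g x * divg (fun x => z (x + y)) x := by
      rw [← integral_add_right_eq_self _ y]
      refine integral_congr_ae (ae_of_all _ fun x => ?_)
      simp only [add_sub_cancel_right, divg, fderiv_comp_add_right]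
    rw [e2]
    have hts : tsupport (fun x => z (x + y)) = (fun x => x + y) ⁻¹' tsupport z :=
      tsupport_comp_eq_preimage z (Homeomorph.addRight y)
    refine hc _ (hz.comp (contDiff_id.add contDiff_const)) ?_ ?_ (fun x => hz1 _)
    · exact hzc.comp_homeomorph (Homeomorph.addRight y)
    · rw [hts]
      intro x hx
      refine hzt (mem_cthickening_of_dist_le x (x + y) _ _ hx ?_)
      rw [dist_eq_norm]
      simpa using hyn.le
  calc ∫ y, ∫ x, (φ.normed volume y * g (x - y)) * divg z x
      ≤ ∫ y, φ.normed volume y * c :=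
        integral_mono h1.integral_prod_right (hφi.mul_const c) h3
    _ = c := by rw [integral_mul_const, φ.integral_normed, one_mul]

theorem moll_grad_bound {N : ℕ} {Ω : Set (Euc N)} {g : Euc N → ℝ} (hg : Integrable g) {c : ℝ}
    (hc : ∀ z : Euc N → Euc N, ContDiff ℝ 2 z → HasCompactSupport z → tsupport z ⊆ Ω →
      (∀ x, ‖z x‖ ≤ 1) → ∫ x, g x * divg z x ≤ c)
    (φ : ContDiffBump (0 : Euc N)) {χ : Euc N → ℝ} (hχ : ContDiff ℝ 2 χ)
    (hχc : HasCompactSupport χ) (hχt : cthickening φ.rOut (tsupport χ) ⊆ Ω)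
    (hχ0 : ∀ x, 0 ≤ χ x) (hχ1 : ∀ x, χ x ≤ 1) :
    ∫⁻ x, ENNReal.ofReal (χ x * ‖fderiv ℝ (moll φ g) x‖) ≤ ENNReal.ofReal c := by
  set G := moll φ g with hG
  have hGs : ContDiff ℝ ((⊤ : ℕ∞) : WithTop ℕ∞) G := moll_contDiff φ hg
  have hGf : Continuous (fun x => fderiv ℝ G x) := hGs.continuous_fderiv (by simp)
  have hcont : Continuous fun x => χ x * ‖fderiv ℝ G x‖ := hχ.continuous.mul hGf.norm
  have hInt : Integrable fun x => χ x * ‖fderiv ℝ G x‖ :=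
    hcont.integrable_of_hasCompactSupport hχc.mul_right
  have hχi : Integrable χ := hχ.continuous.integrable_of_hasCompactSupport hχc
  rw [← ofReal_integral_eq_lintegral_ofReal hInt
    (ae_of_all _ fun x => mul_nonneg (hχ0 x) (norm_nonneg _))]
  apply ENNReal.ofReal_le_ofReal
  have key : ∀ ε : ℝ, 0 < ε → ∫ x, χ x * ‖fderiv ℝ G x‖ ≤ c + ε * ∫ x, χ x := by
    intro ε hε
    let D : Euc N → Euc N := fun x => (InnerProductSpace.toDual ℝ (Euc N)).symm (fderiv ℝ G x)
    have hDn : ∀ x, ‖D x‖ = ‖fderiv ℝ G x‖ := fun x => by simp [D]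
    have hDf : ∀ x, fderiv ℝ G x (D x) = ‖D x‖ ^ 2 := by
      intro x
      have : fderiv ℝ G x (D x) = ⟪D x, D x⟫ := by
        simp only [D]
        rw [InnerProductSpace.toDual_symm_apply]
      rw [this, real_inner_self_eq_norm_sq]
    have hDs : ContDiff ℝ 2 D :=
      (InnerProductSpace.toDual ℝ (Euc N)).symm.toContinuousLinearEquiv.contDiff.comp
        (hGs.fderiv_right (m := 2) (WithTop.coe_le_coe.2 (le_top : (2 + 1 : ℕ∞) ≤ ⊤)))
    let r : Euc N → ℝ := fun x => Real.sqrt (ε ^ 2 + ‖D x‖ ^ 2)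
    have hr0 : ∀ x, 0 < r x := fun x => Real.sqrt_pos.2 (by positivity)
    have hrs : ContDiff ℝ 2 r :=
      (contDiff_const.add (hDs.norm_sq ℝ)).sqrt (fun x => by positivity)
    have hrD : ∀ x, ‖D x‖ ≤ r x := fun x => Real.le_sqrt_of_sq_le (by nlinarith [sq_nonneg ε])
    have hrr : ∀ x, r x ^ 2 = ε ^ 2 + ‖D x‖ ^ 2 := fun x => Real.sq_sqrt (by positivity)
    let z : Euc N → Euc N := fun x => (-(χ x / r x)) • D x
    have hzs : ContDiff ℝ 2 z := ((hχ.div hrs fun x => (hr0 x).ne').neg).smul hDs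
    have hsub : tsupport z ⊆ tsupport χ := by
      refine closure_mono fun x hx => ?_
      intro h0
      apply hx
      simp [z, h0]
    have hzc : HasCompactSupport z := hχc.of_isClosed_subset (isClosed_tsupport _) hsub
    have hz1 : ∀ x, ‖z x‖ ≤ 1 := by
      intro x
      simp only [z, norm_smul, norm_neg, norm_div, Real.norm_of_nonneg (hχ0 x),
        Real.norm_of_nonneg (hr0 x).le]
      rw [div_mul_eq_mul_div, div_le_one (hr0 x)]
      calc χ x * ‖D x‖ ≤ 1 * ‖D x‖ := by gcongr; exact hχ1 x
        _ ≤ r x := by rw [one_mul]; exact hrD x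
    have h1 := moll_div_le hg hc φ hzs hzc ((cthickening_subset_of_subset _ hsub).trans hχt) hz1
    rw [← hG, integral_mul_divg (hzs.of_le one_le_two) hzc (hGs.of_le (by simp)),
      ← integral_neg] at h1
    have e : ∀ x, -(fderiv ℝ G x (z x)) = χ x * (‖D x‖ ^ 2 / r x) := by
      intro x
      simp only [z, map_smul, hDf, smul_eq_mul]
      ring
    simp only [e] at h1
    have hle : ∀ x, χ x * ‖fderiv ℝ G x‖ ≤ χ x * (‖D x‖ ^ 2 / r x) + ε * χ x := by
      intro x
      rw [← hDn, mul_comm ε, ← mul_add]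
      refine mul_le_mul_of_nonneg_left ?_ (hχ0 x)
      rw [div_add' _ _ _ (hr0 x).ne', le_div_iff₀ (hr0 x)]
      have h3 := hrD x
      have h4 := hrr x
      have h5 := norm_nonneg (D x)
      have h6 : ε ≤ r x := Real.le_sqrt_of_sq_le (by nlinarith)
      have h7 : r x ≤ ε + ‖D x‖ := by
        apply abs_le_of_sq_le_sq' _ (by positivity) |>.2
        nlinarith
      nlinarith [mul_nonneg h5 (sub_nonneg.2 h7)]
    have hi2 : Integrable fun x => χ x * (‖D x‖ ^ 2 / r x) := by
      refine Continuous.integrable_of_hasCompactSupport ?_ hχc.mul_right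
      exact hχ.continuous.mul ((hDs.continuous.norm.pow 2).div hrs.continuous
        fun x => (hr0 x).ne')
    calc ∫ x, χ x * ‖fderiv ℝ G x‖ ≤ ∫ x, (χ x * (‖D x‖ ^ 2 / r x) + ε * χ x) :=
          integral_mono hInt (hi2.add (hχi.const_mul ε)) hle
      _ = (∫ x, χ x * (‖D x‖ ^ 2 / r x)) + ε * ∫ x, χ x := by
          rw [integral_add hi2 (hχi.const_mul ε), integral_const_mul]
      _ ≤ _ := by linarith
  have hlim : Tendsto (fun ε : ℝ => c + ε * ∫ x, χ x) (𝓝[>] 0) (𝓝 (c + 0 * ∫ x, χ x)) := by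
    apply Tendsto.mono_left _ nhdsWithin_le_nhds
    exact (continuous_const.add (continuous_id.mul continuous_const)).tendsto 0
  rw [zero_mul, add_zero] at hlim
  exact ge_of_tendsto hlim (by filter_upwards [self_mem_nhdsWithin] with ε hε using key ε hε)

theorem deriv_step_nonneg {T : ℝ → ℝ} (hTm : Monotone T) (s : ℝ) : 0 ≤ deriv T s :=
  hTm.deriv_nonneg

theorem lintegral_deriv_step {T : ℝ → ℝ} (hT : ContDiff ℝ 2 T) (hTm : Monotone T)
    (h0 : ∀ s ≤ 0, T s = 0) (h1 : ∀ s, 1 ≤ s → T s = 1) :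
    ∫⁻ s, ENNReal.ofReal (deriv T s) ≤ 1 := by
  have hd : Continuous (deriv T) := hT.continuous_deriv (by norm_num)
  have hz : ∀ s, s ∉ Icc (0:ℝ) 1 → deriv T s = 0 := by
    intro s hs
    rw [mem_Icc, not_and_or, not_le, not_le] at hs
    rcases hs with hs | hs
    · have : T =ᶠ[𝓝 s] fun _ => 0 := by
        filter_upwards [Iio_mem_nhds hs] with x hx using h0 x (le_of_lt hx)
      rw [this.deriv_eq]; simp
    · have : T =ᶠ[𝓝 s] fun _ => 1 := by
        filter_upwards [Ioi_mem_nhds hs] with x hx using h1 x (le_of_lt hx)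
      rw [this.deriv_eq]; simp
  have hi : Integrable (deriv T) :=
    hd.integrable_of_hasCompactSupport (HasCompactSupport.intro isCompact_Icc hz)
  rw [← ofReal_integral_eq_lintegral_ofReal hi (ae_of_all _ fun s => deriv_step_nonneg hTm s)]
  rw [← setIntegral_eq_integral_of_forall_compl_eq_zero (s := Icc (0:ℝ) 1)
    (fun x hx => hz x hx), integral_Icc_eq_integral_Ioc,
    ← intervalIntegral.integral_of_le zero_le_one, intervalIntegral.integral_deriv_eq_sub
      (fun x _ => hT.differentiable (by norm_num) x) (hd.intervalIntegrable _ _),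
    h0 0 le_rfl, h1 1 le_rfl]
  simp

theorem exists_exhaust {N : ℕ} {Ω : Set (Euc N)} (hΩ : IsOpen Ω) :
    ∃ K : ℕ → Set (Euc N), (∀ n, IsCompact (K n)) ∧ (∀ n, K n ⊆ Ω) ∧
      ∀ L : Set (Euc N), IsCompact L → L ⊆ Ω → ∀ᶠ n in atTop, L ⊆ K n := by
  have : LocallyCompactSpace Ω := hΩ.locallyCompactSpace
  let E : CompactExhaustion Ω := default
  refine ⟨fun n => Subtype.val '' (E n), fun n => (E.isCompact n).image continuous_subtype_val,
    fun n => ?_, fun L hL hLΩ => ?_⟩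
  · rintro _ ⟨x, _, rfl⟩
    exact x.2
  · have hL' : IsCompact ((Subtype.val : Ω → Euc N) ⁻¹' L) := by
      rw [Subtype.isCompact_iff, Subtype.image_preimage_coe, inter_eq_right.2 hLΩ]
      exact hL
    obtain ⟨n, hn⟩ := E.exists_superset_of_isCompact hL'
    filter_upwards [eventually_ge_atTop n] with m hm x hx
    exact ⟨⟨x, hLΩ hx⟩, E.subset hm (hn hx), rfl⟩

/-- Smooth approximations of the Heaviside function. -/
def stepFn (n : ℕ) (s : ℝ) : ℝ := Real.smoothTransition ((n + 1 : ℝ) * s)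

theorem stepFn_contDiff (n : ℕ) : ContDiff ℝ 2 (stepFn n) :=
  (Real.smoothTransition.contDiff (n := 2)).comp (contDiff_const.mul contDiff_id)

theorem stepFn_mono (n : ℕ) : Monotone (stepFn n) := fun a b h =>
  Real.smoothTransition.monotone (by gcongr)

theorem stepFn_zero (n : ℕ) {s : ℝ} (hs : s ≤ 0) : stepFn n s = 0 :=
  Real.smoothTransition.zero_of_nonpos (mul_nonpos_of_nonneg_of_nonpos (by positivity) hs)

theorem stepFn_one (n : ℕ) {s : ℝ} (hs : 1 ≤ (n + 1 : ℝ) * s) : stepFn n s = 1 :=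
  Real.smoothTransition.one_of_one_le hs

theorem stepFn_one' (n : ℕ) {s : ℝ} (hs : 1 ≤ s) : stepFn n s = 1 :=
  stepFn_one n (by nlinarith [Nat.cast_nonneg (α := ℝ) n])

theorem stepFn_abs_le (n : ℕ) (s : ℝ) : |stepFn n s| ≤ 1 := by
  unfold stepFn
  rw [abs_of_nonneg (Real.smoothTransition.nonneg _)]
  exact Real.smoothTransition.le_one _

theorem stepFn_tendsto {a : ℕ → ℝ} {b t : ℝ} (ha : Tendsto a atTop (𝓝 b)) (hb : b ≠ t) :
    Tendsto (fun n => stepFn n (a n - t)) atTop (𝓝 (if t < b then 1 else 0)) := by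
  split_ifs with h
  · have h1 : ∀ᶠ n in atTop, (b + t) / 2 < a n := ha.eventually (lt_mem_nhds (by linarith))
    have h2 : ∀ᶠ n : ℕ in atTop, 1 ≤ ((n : ℝ) + 1) * ((b - t) / 2) := by
      have : Tendsto (fun n : ℕ => ((n : ℝ) + 1) * ((b - t) / 2)) atTop atTop :=
        (tendsto_natCast_atTop_atTop.atTop_add tendsto_const_nhds).atTop_mul_const (by linarith)
      exact this.eventually_ge_atTop 1
    refine tendsto_const_nhds.congr' ?_
    filter_upwards [h1, h2] with n h1 h2
    refine (stepFn_one n (h2.trans ?_)).symm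
    gcongr
    linarith
  · have h1 : ∀ᶠ n in atTop, a n < t :=
      ha.eventually (gt_mem_nhds (lt_of_le_of_ne (not_lt.1 h) hb))
    refine tendsto_const_nhds.congr' ?_
    filter_upwards [h1] with n h1
    exact (stepFn_zero n (by linarith)).symm

theorem TV_le_iff {N : ℕ} {Ω : Set (Euc N)} {u : Euc N → ℝ} {a : ℝ≥0∞} :
    TV Ω u ≤ a ↔ ∀ z : Euc N → Euc N, ContDiff ℝ 1 z → HasCompactSupport z → tsupport z ⊆ Ω →
      (∀ x, ‖z x‖ ≤ 1) → ENNReal.ofReal (∫ x in Ω, u x * divg z x) ≤ a := by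
  simp only [TV, iSup_le_iff]

theorem coarea {N : ℕ} {Ω : Set (Euc N)} (hΩ : IsOpen Ω) {g : Euc N → ℝ} (hg : Integrable g)
    (hgm : Measurable g) {c : ℝ}
    (hc : ∀ z : Euc N → Euc N, ContDiff ℝ 2 z → HasCompactSupport z → tsupport z ⊆ Ω →
      (∀ x, ‖z x‖ ≤ 1) → ∫ x, g x * divg z x ≤ c) :
    ∃ H : ℝ → ℝ≥0∞, ∫⁻ t, H t ≤ ENNReal.ofReal c ∧
      ∀ᵐ t, TV Ω ({x | t < g x}.indicator (fun _ => (1:ℝ))) ≤ H t := by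
  obtain ⟨K, hKc, hKΩ, hKex⟩ := exists_exhaust hΩ
  choose χ hχs hχc hχt hχ0 hχ1 hχK using fun n => exists_cutoff (hKc n) hΩ (hKΩ n)
  choose δ hδ0 hδ using fun n => (hχc n).isCompact.exists_cthickening_subset_open hΩ (hχt n)
  let r : ℕ → ℝ := fun n => min (1 / ((n : ℝ) + 1)) (δ n)
  have hr0 : ∀ n, 0 < r n := fun n => lt_min (by positivity) (hδ0 n)
  let φ : ℕ → ContDiffBump (0 : Euc N) := fun n =>
    ⟨r n / 2, r n, by linarith [hr0 n], by linarith [hr0 n]⟩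
  have hφr : Tendsto (fun n => (φ n).rOut) atTop (𝓝 0) :=
    squeeze_zero (fun n => (hr0 n).le) (fun n => min_le_left _ _)
      tendsto_one_div_add_atTop_nhds_zero_nat
  let G : ℕ → Euc N → ℝ := fun n => moll (φ n) g
  have hGs : ∀ n, ContDiff ℝ 2 (G n) := fun n => (moll_contDiff (φ n) hg).of_le
    (WithTop.coe_le_coe.2 (le_top : (2 : ℕ∞) ≤ ⊤))
  have hGlim : ∀ᵐ x, Tendsto (fun n => G n x) atTop (𝓝 (g x)) :=
    ContDiffBump.ae_convolution_tendsto_right_of_locallyIntegrable (K := 2) hφr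
      (Eventually.of_forall fun n => by simp only [φ]; linarith) hg.locallyIntegrable
  have hGf : ∀ n, Continuous fun x => fderiv ℝ (G n) x := fun n =>
    (hGs n).continuous_fderiv (by norm_num)
  have hTd : ∀ n, Continuous (deriv (stepFn n)) := fun n =>
    (stepFn_contDiff n).continuous_deriv (by norm_num)
  let h : ℕ → ℝ → ℝ≥0∞ := fun n t => ∫⁻ x, ENNReal.ofReal (deriv (stepFn n) (G n x - t)) *
    ENNReal.ofReal (χ n x * ‖fderiv ℝ (G n) x‖)
  have hmeas : ∀ n, Measurable fun p : ℝ × Euc N =>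
      ENNReal.ofReal (deriv (stepFn n) (G n p.2 - p.1)) *
        ENNReal.ofReal (χ n p.2 * ‖fderiv ℝ (G n) p.2‖) := by
    intro n
    have c1 : Continuous fun p : ℝ × Euc N => deriv (stepFn n) (G n p.2 - p.1) :=
      (hTd n).comp (((hGs n).continuous.comp continuous_snd).sub continuous_fst)
    have c2 : Continuous fun p : ℝ × Euc N => χ n p.2 * ‖fderiv ℝ (G n) p.2‖ :=
      ((hχs n).continuous.comp continuous_snd).mul ((hGf n).norm.comp continuous_snd)
    exact (ENNReal.continuous_ofReal.comp c1).measurable.mul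
      (ENNReal.continuous_ofReal.comp c2).measurable
  have hhm : ∀ n, Measurable (h n) := fun n => (hmeas n).lintegral_prod_right'
  have hhle : ∀ n, ∫⁻ t, h n t ≤ ENNReal.ofReal c := by
    intro n
    have hb := moll_grad_bound hg hc (φ n) (hχs n) (hχc n)
      ((cthickening_mono (min_le_right _ _) _).trans (hδ n)) (hχ0 n) (hχ1 n)
    refine le_trans ?_ hb
    simp only [h]
    rw [lintegral_lintegral_swap (hmeas n).aemeasurable]
    refine lintegral_mono fun x => ?_
    rw [lintegral_mul_const' _ _ ENNReal.ofReal_ne_top]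
    rw [lintegral_sub_left_eq_self (fun s => ENNReal.ofReal (deriv (stepFn n) s)) (G n x)]
    calc _ ≤ 1 * ENNReal.ofReal (χ n x * ‖fderiv ℝ (G n) x‖) := by
          gcongr
          exact lintegral_deriv_step (stepFn_contDiff n) (stepFn_mono n)
            (fun s hs => stepFn_zero n hs) (fun s hs => stepFn_one' n hs)
      _ = _ := one_mul _
  refine ⟨fun t => liminf (fun n => h n t) atTop, ?_, ?_⟩
  · refine (lintegral_liminf_le hhm).trans ?_
    refine liminf_le_of_le (by isBoundedDefault) fun b hb => ?_
    obtain ⟨n, hn⟩ := hb.exists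
    exact hn.trans (hhle n)
  · have hcnt := Measure.countable_meas_level_set_pos (μ := (volume : Measure (Euc N))) hgm
    filter_upwards [hcnt.ae_notMem volume] with t ht
    have htn : ∀ᵐ x, g x ≠ t := by
      have : volume {a | g a = t} = 0 := by simpa using ht
      rw [ae_iff]
      simpa using this
    rw [TV_le_iff]
    intro z hz hzc hzt hz1
    rw [setIntegral_divg hzt]
    have hdc := divg_continuous hz
    have hdi : Integrable (divg z) :=
      hdc.integrable_of_hasCompactSupport (divg_hasCompactSupport hzc)
    have hlim : Tendsto (fun n => ∫ x, stepFn n (G n x - t) * divg z x) atTop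
        (𝓝 (∫ x, {x | t < g x}.indicator (fun _ => (1:ℝ)) x * divg z x)) := by
      refine tendsto_integral_of_dominated_convergence (fun x => |divg z x|) ?_ hdi.abs ?_ ?_
      · intro n
        exact (((stepFn_contDiff n).continuous.comp
          ((hGs n).continuous.sub continuous_const)).mul hdc).aestronglyMeasurable
      · intro n
        refine ae_of_all _ fun x => ?_
        rw [norm_mul, Real.norm_eq_abs, Real.norm_eq_abs]
        exact mul_le_of_le_one_left (abs_nonneg _) (stepFn_abs_le _ _)
      · filter_upwards [hGlim, htn] with x hx hxt
        refine Tendsto.mul_const _ ?_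
        have := stepFn_tendsto hx hxt
        simpa [indicator_apply] using this
    have hlim2 := (ENNReal.continuous_ofReal.tendsto _).comp hlim
    rw [← hlim2.liminf_eq]
    refine liminf_le_liminf ?_ (by isBoundedDefault) (by isBoundedDefault)
    filter_upwards [hKex _ hzc.isCompact hzt] with n hn
    simp only [Function.comp]
    have hS : ContDiff ℝ 1 fun x => stepFn n (G n x - t) :=
      ((stepFn_contDiff n).comp ((hGs n).sub contDiff_const)).of_le one_le_two
    rw [integral_mul_divg hz hzc hS, ← integral_neg]
    have hder : ∀ x, fderiv ℝ (fun x => stepFn n (G n x - t)) x (z x) =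
        deriv (stepFn n) (G n x - t) * fderiv ℝ (G n) x (z x) := by
      intro x
      have d1 : HasFDerivAt (fun x => G n x - t) (fderiv ℝ (G n) x) x :=
        ((hGs n).differentiable (by norm_num) x).hasFDerivAt.sub_const t
      have d2 : HasDerivAt (stepFn n) (deriv (stepFn n) (G n x - t)) (G n x - t) :=
        ((stepFn_contDiff n).differentiable (by norm_num) _).hasDerivAt
      have d3 := d2.comp_hasFDerivAt x d1
      have d4 : fderiv ℝ (fun x => stepFn n (G n x - t)) x =
        deriv (stepFn n) (G n x - t) • fderiv ℝ (G n) x := d3.fderiv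
      rw [d4]
      rfl
    simp only [hder]
    refine (Real.ofReal_le_enorm _).trans ((enorm_integral_le_lintegral_enorm _).trans ?_)
    refine lintegral_mono fun x => ?_
    have hT0 := deriv_step_nonneg (stepFn_mono n) (G n x - t)
    rw [enorm_neg, enorm_mul, Real.enorm_of_nonneg hT0]
    gcongr
    rw [← ofReal_norm]
    apply ENNReal.ofReal_le_ofReal
    by_cases hx : x ∈ tsupport z
    · rw [hχK n x (hn hx), one_mul]
      calc ‖fderiv ℝ (G n) x (z x)‖ ≤ ‖fderiv ℝ (G n) x‖ * ‖z x‖ :=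
            ContinuousLinearMap.le_opNorm _ _
        _ ≤ ‖fderiv ℝ (G n) x‖ * 1 := by gcongr; exact hz1 x
        _ = _ := mul_one _
    · rw [image_eq_zero_of_notMem_tsupport hx]
      simp only [map_zero, norm_zero]
      exact mul_nonneg (hχ0 n x) (norm_nonneg _)

theorem TV_congr_ae {N : ℕ} {Ω : Set (Euc N)} {f g : Euc N → ℝ}
    (h : f =ᵐ[volume.restrict Ω] g) : TV Ω f = TV Ω g := by
  have : ∀ z : Euc N → Euc N, ∫ x in Ω, f x * divg z x = ∫ x in Ω, g x * divg z x := fun z =>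
    integral_congr_ae (by filter_upwards [h] with x hx; rw [hx])
  simp only [TV, this]

theorem layer_kernel (a : ℝ) :
    Integrable (fun t : ℝ => (if t < a then (1:ℝ) else 0) - (if t < 0 then 1 else 0)) ∧
    ∫ t : ℝ, ((if t < a then (1:ℝ) else 0) - (if t < 0 then 1 else 0)) = a ∧
    ∫ t : ℝ, ‖(if t < a then (1:ℝ) else 0) - (if t < 0 then 1 else 0)‖ = |a| := by
  rcases le_or_gt 0 a with ha | ha
  · have e : (fun t : ℝ => (if t < a then (1:ℝ) else 0) - (if t < 0 then 1 else 0)) =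
        (Ico 0 a).indicator (fun _ => 1) := by
      ext t
      simp only [indicator_apply, mem_Ico]
      grind
    have e2 : (fun t : ℝ => ‖(if t < a then (1:ℝ) else 0) - (if t < 0 then 1 else 0)‖) =
        (Ico 0 a).indicator (fun _ => 1) := by
      ext t
      rw [congrFun e t]
      simp only [indicator_apply]
      split_ifs <;> simp
    rw [e, e2, abs_of_nonneg ha, integral_indicator measurableSet_Ico]
    refine ⟨?_, ?_⟩
    · rw [integrable_indicator_iff measurableSet_Ico]
      exact integrableOn_const (by simp)
    · simp [ha]
  · have e : (fun t : ℝ => (if t < a then (1:ℝ) else 0) - (if t < 0 then 1 else 0)) =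
        (Ico a 0).indicator (fun _ => -1) := by
      ext t
      simp only [indicator_apply, mem_Ico]
      grind
    have e2 : (fun t : ℝ => ‖(if t < a then (1:ℝ) else 0) - (if t < 0 then 1 else 0)‖) =
        (Ico a 0).indicator (fun _ => 1) := by
      ext t
      rw [congrFun e t]
      simp only [indicator_apply]
      split_ifs <;> simp
    rw [e, e2, abs_of_neg ha, integral_indicator measurableSet_Ico,
      integral_indicator measurableSet_Ico]
    refine ⟨?_, ?_, ?_⟩
    · rw [integrable_indicator_iff measurableSet_Ico]
      exact integrableOn_const (by simp)
    · simp [ha.le]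
    · simp [ha.le]

theorem ofReal_integral_le_lintegral {α : Type*} [MeasurableSpace α] {μ : Measure α} {F : α → ℝ}
    (hF : Integrable F μ) : ENNReal.ofReal (∫ t, F t ∂μ) ≤ ∫⁻ t, ENNReal.ofReal (F t) ∂μ := by
  have h1 : ∫ t, F t ∂μ ≤ ∫ t, max (F t) 0 ∂μ :=
    integral_mono hF hF.pos_part fun t => le_max_left _ _
  refine (ENNReal.ofReal_le_ofReal h1).trans ?_
  rw [ofReal_integral_eq_lintegral_ofReal hF.pos_part (ae_of_all _ fun t => le_max_right _ _)]
  refine lintegral_mono fun t => ?_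
  rcases le_total (F t) 0 with h | h <;> simp [h]

theorem layer_cake {N : ℕ} {U : Euc N → ℝ} (hU : Integrable U) (hUm : Measurable U)
    {z : Euc N → Euc N} (hz : ContDiff ℝ 1 z) (hzc : HasCompactSupport z) :
    ENNReal.ofReal (∫ x, U x * divg z x) ≤
      ∫⁻ t, ENNReal.ofReal (∫ x, {x | t < U x}.indicator (fun _ => (1:ℝ)) x * divg z x) := by
  have hdc := divg_continuous hz
  have hdi : Integrable (divg z) :=
    hdc.integrable_of_hasCompactSupport (divg_hasCompactSupport hzc)
  obtain ⟨A, hA⟩ := hdc.bounded_above_of_compact_support (divg_hasCompactSupport hzc)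
  let k : Euc N → ℝ → ℝ := fun x t => (if t < U x then (1:ℝ) else 0) - (if t < 0 then 1 else 0)
  have hkm : Measurable fun p : Euc N × ℝ => k p.1 p.2 := by
    refine Measurable.sub ?_ ?_
    · exact Measurable.ite (measurableSet_lt measurable_snd (hUm.comp measurable_fst))
        measurable_const measurable_const
    · exact Measurable.ite (measurableSet_lt measurable_snd measurable_const)
        measurable_const measurable_const
  have hki : Integrable (fun p : Euc N × ℝ => k p.1 p.2) (volume.prod volume) := by
    rw [integrable_prod_iff hkm.aestronglyMeasurable]
    refine ⟨ae_of_all _ fun x => (layer_kernel (U x)).1, ?_⟩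
    have : (fun x => ∫ t, ‖k x t‖) = fun x => |U x| :=
      funext fun x => (layer_kernel (U x)).2.2
    simp only [this]
    exact hU.abs
  have hkd : Integrable (fun p : Euc N × ℝ => k p.1 p.2 * divg z p.1) (volume.prod volume) :=
    hki.mul_bdd (c := A) (hdc.comp continuous_fst).aestronglyMeasurable (ae_of_all _ fun p => hA _)
  have e1 : ∫ x, U x * divg z x = ∫ x, ∫ t, k x t * divg z x := by
    refine integral_congr_ae (ae_of_all _ fun x => ?_)
    simp only
    rw [integral_mul_const]
    congr 1
    exact (layer_kernel (U x)).2.1.symm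
  have e2 : ∀ t, ∫ x, k x t * divg z x =
      ∫ x, {x | t < U x}.indicator (fun _ => (1:ℝ)) x * divg z x := by
    intro t
    have e3 : ∀ x, k x t * divg z x = {x | t < U x}.indicator (fun _ => (1:ℝ)) x * divg z x -
        (if t < 0 then 1 else 0) * divg z x := by
      intro x
      simp only [k, indicator_apply, mem_setOf_eq]
      ring
    simp only [e3]
    rw [integral_sub, integral_const_mul, integral_divg hz hzc]
    · simp
    · refine hdi.bdd_mul (c := 1) ?_ (ae_of_all _ fun x => ?_)
      · exact (measurable_const.indicator
          (measurableSet_lt measurable_const hUm)).aestronglyMeasurable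
      · simp only [indicator_apply]
        split_ifs <;> simp
    · exact hdi.const_mul _
  rw [e1, integral_integral_swap hkd]
  refine (ofReal_integral_le_lintegral hkd.integral_prod_right).trans ?_
  simp only [e2]
  exact le_rfl

theorem partA {N : ℕ} (Ω : Set (Euc N)) (hΩ : IsOpen Ω)
    (u : Euc N → ℝ) (hu1 : IntegrableOn u Ω volume)
    (h : ∀ᵐ t ∂(volume : Measure ℝ),
      IsLeastGradient Ω ({x | t < u x}.indicator (fun _ => (1:ℝ))))
    {K : Set (Euc N)} (hK : IsCompact K) (hKΩ : K ⊆ Ω) {v : Euc N → ℝ} (hv : Integrable v)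
    (hvK : ∀ x, x ∉ K → v x = 0) {c : ℝ}
    (hc : ∀ z : Euc N → Euc N, ContDiff ℝ 2 z → HasCompactSupport z → tsupport z ⊆ Ω →
      (∀ x, ‖z x‖ ≤ 1) → ∫ x in Ω, (u x + v x) * divg z x ≤ c) :
    TV Ω u ≤ ENNReal.ofReal c := by
  have hui : Integrable (Ω.indicator u) := (integrable_indicator_iff hΩ.measurableSet).2 hu1
  let U := hui.1.mk
  have hUe : Ω.indicator u =ᵐ[volume] U := hui.1.ae_eq_mk
  have hUm : Measurable U := hui.1.stronglyMeasurable_mk.measurable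
  have hUi : Integrable U := hui.congr hUe
  have hUr : u =ᵐ[volume.restrict Ω] U := by
    filter_upwards [ae_restrict_of_ae hUe, ae_restrict_mem hΩ.measurableSet] with x hx hxΩ
    rw [← hx, indicator_of_mem hxΩ]
  let V := K.indicator hv.1.mk
  have hVe : v =ᵐ[volume] V := by
    filter_upwards [hv.1.ae_eq_mk] with x hx
    by_cases hxK : x ∈ K
    · simp only [V, indicator_of_mem hxK, hx]
    · simp only [V, indicator_of_notMem hxK, hvK x hxK]
  have hVm : Measurable V :=
    hv.1.stronglyMeasurable_mk.measurable.indicator hK.isClosed.measurableSet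
  have hVi : Integrable V := hv.congr hVe
  have hc' : ∀ z : Euc N → Euc N, ContDiff ℝ 2 z → HasCompactSupport z → tsupport z ⊆ Ω →
      (∀ x, ‖z x‖ ≤ 1) → ∫ x, (U x + V x) * divg z x ≤ c := by
    intro z hz hzc hzt hz1
    refine le_trans (le_of_eq ?_) (hc z hz hzc hzt hz1)
    rw [← setIntegral_divg hzt (fun x => U x + V x)]
    refine integral_congr_ae ?_
    filter_upwards [hUr, ae_restrict_of_ae hVe] with x h1 h2
    rw [h1, h2]
  obtain ⟨H, hHc, hH⟩ := coarea hΩ (hUi.add hVi) (hUm.add hVm) hc'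
  rw [TV_le_iff]
  intro z hz hzc hzt hz1
  have e1 : ∫ x in Ω, u x * divg z x = ∫ x, U x * divg z x := by
    rw [← setIntegral_divg hzt U]
    refine integral_congr_ae ?_
    filter_upwards [hUr] with x h1
    rw [h1]
  rw [e1]
  refine (layer_cake hUi hUm hz hzc).trans (le_trans ?_ hHc)
  refine lintegral_mono_ae ?_
  filter_upwards [h, hH] with t ht hHt
  refine le_trans ?_ hHt
  let g : Euc N → ℝ := U + V
  let a : Euc N → ℝ := {x | t < u x}.indicator (fun _ => (1:ℝ))
  let b : Euc N → ℝ := {x | t < g x}.indicator (fun _ => (1:ℝ))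
  let w : Euc N → ℝ := K.indicator (b - a)
  have hwK : tsupport w ⊆ K := by
    refine closure_minimal (fun x hx => ?_) hK.isClosed
    by_contra hxK
    exact hx (indicator_of_notMem hxK _)
  have hlg := ht w (hK.of_isClosed_subset (isClosed_tsupport _) hwK) (hwK.trans hKΩ)
  have e2 : TV Ω (a + w) = TV Ω b := by
    apply TV_congr_ae
    filter_upwards [hUr] with x hx
    by_cases hxK : x ∈ K
    · simp [w, indicator_of_mem hxK]
    · simp [w, indicator_of_notMem hxK, a, b, g, V, indicator_apply, hx]
  have e3 : ENNReal.ofReal (∫ x, {x | t < U x}.indicator (fun _ => (1:ℝ)) x * divg z x) ≤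
      TV Ω a := by
    have e4 : ∫ x, {x | t < U x}.indicator (fun _ => (1:ℝ)) x * divg z x =
        ∫ x in Ω, a x * divg z x := by
      rw [← setIntegral_divg hzt]
      refine integral_congr_ae ?_
      filter_upwards [hUr] with x hx
      simp only [a, indicator_apply, mem_setOf_eq, hx]
    rw [e4]
    exact TV_le_iff.1 le_rfl z hz hzc hzt hz1
  exact e3.trans (hlg.trans e2.le)

theorem integrable_mul_divg {N : ℕ} {Ω : Set (Euc N)} {u : Euc N → ℝ}
    (hu : IntegrableOn u Ω volume) {z : Euc N → Euc N} (hz : ContDiff ℝ 1 z)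
    (hzc : HasCompactSupport z) : IntegrableOn (fun x => u x * divg z x) Ω volume := by
  have hdc := divg_continuous hz
  obtain ⟨A, hA⟩ := hdc.bounded_above_of_compact_support (divg_hasCompactSupport hzc)
  exact Integrable.mul_bdd (c := A) hu hdc.aestronglyMeasurable (ae_of_all _ hA)

theorem integral_le_TV {N : ℕ} {Ω : Set (Euc N)} {u : Euc N → ℝ} (hu2 : TV Ω u ≠ ⊤)
    {y : Euc N → Euc N} (hy : ContDiff ℝ 1 y) (hyc : HasCompactSupport y) (hyt : tsupport y ⊆ Ω)
    {M : ℝ} (hM : 0 < M) (hyM : ∀ x, ‖y x‖ ≤ M) :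
    ∫ x in Ω, u x * divg y x ≤ M * (TV Ω u).toReal := by
  have hd : Differentiable ℝ y := hy.differentiable one_ne_zero
  have hsub : tsupport (fun x => M⁻¹ • y x) ⊆ tsupport y := by
    refine closure_mono fun x hx => ?_
    intro h0
    apply hx
    simp [h0]
  have h1 := TV_le_iff.1 (le_refl (TV Ω u)) (fun x => M⁻¹ • y x) (hy.const_smul _)
    (hyc.of_isClosed_subset (isClosed_tsupport _) hsub) (hsub.trans hyt) (fun x => by
      rw [norm_smul, norm_inv, Real.norm_of_nonneg hM.le, inv_mul_le_iff₀ hM, mul_one]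
      exact hyM x)
  have e : ∀ x, u x * divg (fun x => M⁻¹ • y x) x = M⁻¹ * (u x * divg y x) := by
    intro x
    rw [divg_smul (hd x)]
    ring
  simp only [e] at h1
  rw [integral_const_mul, ENNReal.ofReal_le_iff_le_toReal hu2, inv_mul_le_iff₀ hM] at h1
  exact h1

theorem partB {N : ℕ} (Ω : Set (Euc N)) (hΩ : IsOpen Ω)
    (u : Euc N → ℝ) (hu1 : IntegrableOn u Ω volume)
    (h : ∀ᵐ t ∂(volume : Measure ℝ),
      IsLeastGradient Ω ({x | t < u x}.indicator (fun _ => (1:ℝ))))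
    {K : Set (Euc N)} (hK : IsCompact K) (hKΩ : K ⊆ Ω) {τ : ℝ} (hτ0 : 0 < τ)
    (hτ : ENNReal.ofReal τ < TV Ω u) {δ : ℝ} (hδ : 0 < δ) :
    ∃ z : Euc N → Euc N, ContDiff ℝ 2 z ∧ HasCompactSupport z ∧ tsupport z ⊆ Ω ∧
      (∀ x, ‖z x‖ ≤ 1) ∧
      eLpNorm (divg z) ((N + 1 : ℕ) : ℝ≥0∞) (volume.restrict K) ≤ ENNReal.ofReal δ ∧
      τ - δ ≤ ∫ x in Ω, u x * divg z x := by
  let q : ℝ≥0∞ := ((N + 1 : ℕ) : ℝ≥0∞)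
  have hq1 : Fact (1 ≤ q) := ⟨by simp only [q]; exact_mod_cast Nat.le_add_left 1 N⟩
  have hqt : q ≠ ⊤ := by simp [q]
  let μ : Measure (Euc N) := volume.restrict K
  have hμ : IsFiniteMeasure μ := ⟨by simpa [μ] using hK.measure_lt_top⟩
  have hmem : ∀ z : Euc N → Euc N, ContDiff ℝ 2 z → HasCompactSupport z →
      MemLp (divg z) q μ := fun z hz hzc =>
    ((divg_continuous (hz.of_le one_le_two)).memLp_of_hasCompactSupport
      (divg_hasCompactSupport hzc)).restrict K
  let C : Set (Lp ℝ q μ × ℝ) := {p | ∃ z : Euc N → Euc N, ContDiff ℝ 2 z ∧ HasCompactSupport z ∧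
    tsupport z ⊆ Ω ∧ (∀ x, ‖z x‖ ≤ 1) ∧ p.1 =ᵐ[μ] divg z ∧ p.2 = ∫ x in Ω, u x * divg z x}
  have hCconv : Convex ℝ C := by
    rintro p ⟨z, hz, hzc, hzt, hz1, hp1, hp2⟩ p' ⟨z', hz', hzc', hzt', hz1', hp1', hp2'⟩ a b ha hb
      hab
    have d1 : Differentiable ℝ z := hz.differentiable (by norm_num)
    have d2 : Differentiable ℝ z' := hz'.differentiable (by norm_num)
    have e : ∀ x, divg (fun x => a • z x + b • z' x) x = a * divg z x + b * divg z' x := by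
      intro x
      have c1 : DifferentiableAt ℝ (fun x => a • z x) x := (d1 x).const_smul a
      have c2 : DifferentiableAt ℝ (fun x => b • z' x) x := (d2 x).const_smul b
      rw [divg_add c1 c2, divg_smul (d1 x), divg_smul (d2 x)]
    have hsub : tsupport (fun x => a • z x + b • z' x) ⊆ tsupport z ∪ tsupport z' := by
      refine closure_minimal (fun x hx => ?_)
        ((isClosed_tsupport _).union (isClosed_tsupport _))
      by_contra hn
      rw [mem_union, not_or] at hn
      apply hx
      simp [image_eq_zero_of_notMem_tsupport hn.1, image_eq_zero_of_notMem_tsupport hn.2]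
    refine ⟨fun x => a • z x + b • z' x, (hz.const_smul a).add (hz'.const_smul b), ?_,
      hsub.trans (union_subset hzt hzt'), ?_, ?_, ?_⟩
    · exact (hzc.isCompact.union hzc'.isCompact).of_isClosed_subset (isClosed_tsupport _) hsub
    · intro x
      calc ‖a • z x + b • z' x‖ ≤ ‖a • z x‖ + ‖b • z' x‖ := norm_add_le _ _
        _ = a * ‖z x‖ + b * ‖z' x‖ := by
            rw [norm_smul, norm_smul, Real.norm_of_nonneg ha, Real.norm_of_nonneg hb]
        _ ≤ a * 1 + b * 1 := by gcongr; exacts [hz1 x, hz1' x]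
        _ = 1 := by linarith
    · have l1 := Lp.coeFn_add (a • p.1) (b • p'.1)
      have l2 := Lp.coeFn_smul a p.1
      have l3 := Lp.coeFn_smul b p'.1
      filter_upwards [l1, l2, l3, hp1, hp1'] with x h1 h2 h3 h4 h5
      change (a • p.1 + b • p'.1 : Lp ℝ q μ) x = _
      rw [h1, Pi.add_apply, h2, h3, Pi.smul_apply, Pi.smul_apply, h4, h5, e]
      rfl
    · change a * p.2 + b * p'.2 = _
      rw [hp2, hp2', ← integral_const_mul, ← integral_const_mul, ← integral_add]
      · refine integral_congr_ae (ae_of_all _ fun x => ?_)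
        simp only [e]
        ring
      · exact (integrable_mul_divg hu1 (hz.of_le one_le_two) hzc).const_mul a
      · exact (integrable_mul_divg hu1 (hz'.of_le one_le_two) hzc').const_mul b
  have hcl : ((0 : Lp ℝ q μ), τ) ∈ closure C := by
    by_contra hn
    obtain ⟨F, s, hF1, hF2⟩ := geometric_hahn_banach_closed_point hCconv.closure isClosed_closure hn
    let l : Lp ℝ q μ →L[ℝ] ℝ := F.comp (ContinuousLinearMap.inl ℝ (Lp ℝ q μ) ℝ)
    set a : ℝ := F (0, 1) with ha
    have hFs : ∀ p r, F (p, r) = l p + a * r := by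
      intro p r
      have : ((p, r) : Lp ℝ q μ × ℝ) = (p, 0) + r • ((0 : Lp ℝ q μ), (1:ℝ)) := by simp
      rw [this, map_add, map_smul, smul_eq_mul, mul_comm r]
      rfl
    have hd0 : ∀ x, divg (fun _ : Euc N => (0 : Euc N)) x = 0 := by
      intro x; simp [divg]
    have hs0 : 0 < s := by
      have h0 : (0 : Lp ℝ q μ × ℝ) ∈ C := by
        refine ⟨fun _ => 0, contDiff_const, HasCompactSupport.zero, ?_, by simp, ?_, ?_⟩
        · simp [tsupport]
        · filter_upwards [Lp.coeFn_zero ℝ q μ] with x hx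
          change (0 : Lp ℝ q μ) x = _
          rw [hx, hd0]; rfl
        · simp [hd0]
      simpa using hF1 0 (subset_closure h0)
    rw [hFs, map_zero, zero_add] at hF2
    have ha0 : 0 < a := by
      by_contra hna
      have := mul_nonpos_of_nonpos_of_nonneg (not_lt.1 hna) hτ0.le
      linarith
    obtain ⟨v, hvi, hv⟩ := lp_dual_repr μ q hqt l
    let V : Euc N → ℝ := K.indicator (fun x => a⁻¹ * v x)
    have hVi : Integrable V := by
      rw [integrable_indicator_iff hK.isClosed.measurableSet]
      exact hvi.const_mul _
    have hle : TV Ω u ≤ ENNReal.ofReal (s / a) := by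
      refine partA Ω hΩ u hu1 h hK hKΩ hVi (fun x hx => indicator_of_notMem hx _) ?_
      intro z hz hzc hzt hz1
      have hzC1 : ContDiff ℝ 1 z := hz.of_le one_le_two
      have hdc := divg_continuous hzC1
      obtain ⟨A, hA⟩ := hdc.bounded_above_of_compact_support (divg_hasCompactSupport hzc)
      have h1 := hF1 ((hmem z hz hzc).toLp (divg z), ∫ x in Ω, u x * divg z x) (subset_closure
        ⟨z, hz, hzc, hzt, hz1, MemLp.coeFn_toLp (hmem z hz hzc), rfl⟩)
      rw [hFs, hv (divg z) (hmem z hz hzc) hdc.measurable ⟨A, hA⟩] at h1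
      have h2 : ∫ x in Ω, V x * divg z x = a⁻¹ * ∫ x, v x * divg z x ∂μ := by
        rw [setIntegral_divg hzt, ← integral_const_mul,
          ← integral_indicator hK.isClosed.measurableSet]
        refine integral_congr_ae (ae_of_all _ fun x => ?_)
        by_cases hx : x ∈ K
        · simp only [V, indicator_of_mem hx, mul_assoc]
        · simp only [V, indicator_of_notMem hx, zero_mul]
      have h3 : ∫ x in Ω, (u x + V x) * divg z x =
          (∫ x in Ω, u x * divg z x) + ∫ x in Ω, V x * divg z x := by
        rw [← integral_add (integrable_mul_divg hu1 hzC1 hzc)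
          (integrable_mul_divg hVi.integrableOn hzC1 hzc)]
        simp only [add_mul]
      rw [h3, h2, le_div_iff₀ ha0]
      have h4 : (a⁻¹ * ∫ x, v x * divg z x ∂μ) * a = ∫ x, v x * divg z x ∂μ := by
        field_simp
      rw [add_mul, h4]
      linarith
    have hlt : s / a < τ := by
      rw [div_lt_iff₀ ha0]
      linarith
    exact absurd (hle.trans (ENNReal.ofReal_le_ofReal hlt.le)) (not_le.2 hτ)
  obtain ⟨p, ⟨z, hz, hzc, hzt, hz1, hp1, hp2⟩, hpd⟩ := Metric.mem_closure_iff.1 hcl δ hδ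
  refine ⟨z, hz, hzc, hzt, hz1, ?_, ?_⟩
  · rw [← eLpNorm_congr_ae hp1, ← Lp.enorm_def, ← ofReal_norm]
    apply ENNReal.ofReal_le_ofReal
    have : dist (0 : Lp ℝ q μ) p.1 ≤ dist ((0 : Lp ℝ q μ), τ) p := le_max_left _ _
    rw [dist_zero_left] at this
    linarith
  · have : dist τ p.2 ≤ dist ((0 : Lp ℝ q μ), τ) p := le_max_right _ _
    rw [Real.dist_eq] at this
    have := le_abs_self (τ - p.2)
    linarith

theorem partC {N : ℕ} (hN : 0 < N) (Ω : Set (Euc N)) (hΩ : IsOpen Ω)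
    (u : Euc N → ℝ) (hu1 : IntegrableOn u Ω volume) (hu2 : TV Ω u ≠ ⊤)
    (h : ∀ᵐ t ∂(volume : Measure ℝ),
      IsLeastGradient Ω ({x | t < u x}.indicator (fun _ => (1:ℝ))))
    (v : Euc N → ℝ) (hv : HasCompactSupport v) (hvt : tsupport v ⊆ Ω) {τ : ℝ} (hτ0 : 0 < τ)
    (hτ : ENNReal.ofReal τ < TV Ω u) : ENNReal.ofReal τ ≤ TV Ω (u + v) := by
  obtain ⟨ψ, hψ, hψc, hψt, hψ0, hψ1, hψK⟩ := exists_cutoff hv.isCompact hΩ hvt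
  obtain ⟨C, hC⟩ := div_inverse hN hψc.isCompact
  set T := (TV Ω u).toReal with hT
  set c : ℝ := (C : ℝ) + 1 with hc
  have hc0 : 0 < c := by positivity
  have key : ∀ δ : ℝ, 0 < δ →
      ENNReal.ofReal ((1 + c * δ)⁻¹ * (τ - δ - c * δ * T)) ≤ TV Ω (u + v) := by
    intro δ hδ
    obtain ⟨z, hz, hzc, hzt, hz1, hzδ, hzτ⟩ := partB Ω hΩ u hu1 h hψc.isCompact hψt hτ0 hτ hδ
    have hzC1 : ContDiff ℝ 1 z := hz.of_le one_le_two
    have hψC1 : ContDiff ℝ 1 ψ := hψ.of_le one_le_two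
    obtain ⟨w, hw, hwd, hwb⟩ := hC (fun x => ψ x * divg z x) (hψC1.mul (divg_contDiff hz))
      (fun x hx => by rw [image_eq_zero_of_notMem_tsupport hx, zero_mul])
    have hM : 0 < c * δ := by positivity
    have hwn : ∀ x, ‖w x‖ ≤ c * δ := by
      intro x
      have h1 : eLpNorm (fun x => ψ x * divg z x) ((N + 1 : ℕ) : ℝ≥0∞) volume ≤
          ENNReal.ofReal δ := by
        refine le_trans ?_ hzδ
        rw [← eLpNorm_indicator_eq_eLpNorm_restrict (isClosed_tsupport ψ).measurableSet]
        refine eLpNorm_mono fun x => ?_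
        by_cases hx : x ∈ tsupport ψ
        · rw [indicator_of_mem hx, norm_mul, Real.norm_of_nonneg (hψ0 x)]
          exact mul_le_of_le_one_left (norm_nonneg _) (hψ1 x)
        · rw [image_eq_zero_of_notMem_tsupport hx, zero_mul, norm_zero]
          exact norm_nonneg _
      have h2 : ‖w x‖ₑ ≤ ENNReal.ofReal (c * δ) := by
        refine (hwb x).trans ?_
        rw [ENNReal.ofReal_mul hc0.le]
        refine mul_le_mul' ?_ h1
        rw [← ENNReal.ofReal_coe_nnreal]
        exact ENNReal.ofReal_le_ofReal (by linarith)
      rw [← ofReal_norm] at h2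
      exact (ENNReal.ofReal_le_ofReal_iff hM.le).1 h2
    let y : Euc N → Euc N := fun x => ψ x • w x
    have hy : ContDiff ℝ 1 y := hψC1.smul hw
    have hyt : tsupport y ⊆ tsupport ψ := by
      refine closure_mono fun x hx h0 => hx ?_
      simp [y, h0]
    have hyc : HasCompactSupport y := hψc.of_isClosed_subset (isClosed_tsupport _) hyt
    have hyn : ∀ x, ‖y x‖ ≤ c * δ := by
      intro x
      simp only [y, norm_smul, Real.norm_of_nonneg (hψ0 x)]
      exact (mul_le_of_le_one_left (norm_nonneg _) (hψ1 x)).trans (hwn x)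
    have hyT := integral_le_TV hu2 hy hyc (hyt.trans hψt) hM hyn
    have dz : Differentiable ℝ z := hzC1.differentiable one_ne_zero
    have dy : Differentiable ℝ y := hy.differentiable one_ne_zero
    have dw : Differentiable ℝ w := hw.differentiable one_ne_zero
    have dψ : Differentiable ℝ ψ := hψC1.differentiable one_ne_zero
    let b : ℝ := (1 + c * δ)⁻¹
    have hb : 0 < b := by positivity
    let Z : Euc N → Euc N := fun x => b • (z x + (-1 : ℝ) • y x)
    have hZd : ∀ x, divg Z x = b * (divg z x - divg y x) := by
      intro x
      have d1 : DifferentiableAt ℝ (fun x => (-1 : ℝ) • y x) x := (dy x).const_smul (-1 : ℝ)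
      have d2 : DifferentiableAt ℝ (fun x => z x + (-1 : ℝ) • y x) x := (dz x).add d1
      simp only [Z]
      rw [divg_smul d2, divg_add (dz x) d1, divg_smul (dy x)]
      ring
    have hZ0 : ∀ x ∈ tsupport v, divg Z x = 0 := by
      intro x hx
      have hx1 := hψK x hx
      have hxt : x ∈ tsupport ψ := subset_tsupport _ (by simp [hx1])
      have hf0 : fderiv ℝ ψ x = 0 := by
        apply IsLocalMax.fderiv_eq_zero
        exact Eventually.of_forall fun y => by rw [hx1]; exact hψ1 y
      rw [hZd]
      simp only [y]
      rw [divg_fun_smul (dw x) (dψ x), hwd x hxt, hf0, hx1]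
      simp
    have hZC : ContDiff ℝ 1 Z := (hzC1.add (hy.const_smul (-1 : ℝ))).const_smul b
    have hZt : tsupport Z ⊆ tsupport z ∪ tsupport ψ := by
      refine closure_minimal (fun x hx => ?_)
        ((isClosed_tsupport _).union (isClosed_tsupport _))
      by_contra hn
      rw [mem_union, not_or] at hn
      apply hx
      simp [Z, y, image_eq_zero_of_notMem_tsupport hn.1, image_eq_zero_of_notMem_tsupport hn.2]
    have hZc : HasCompactSupport Z :=
      (hzc.isCompact.union hψc.isCompact).of_isClosed_subset (isClosed_tsupport _) hZt
    have hZ1 : ∀ x, ‖Z x‖ ≤ 1 := by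
      intro x
      simp only [Z, norm_smul, Real.norm_of_nonneg hb.le]
      rw [inv_mul_le_iff₀ (by positivity), mul_one]
      refine (norm_add_le _ _).trans ?_
      rw [norm_smul, norm_neg, norm_one, one_mul]
      exact add_le_add (hz1 x) (hyn x)
    have hTV := TV_le_iff.1 (le_refl (TV Ω (u + v))) Z hZC hZc
      (hZt.trans (union_subset hzt hψt)) hZ1
    refine le_trans (ENNReal.ofReal_le_ofReal ?_) hTV
    have e1 : ∀ x, (u + v) x * divg Z x = b * (u x * divg z x - u x * divg y x) := by
      intro x
      have : v x * divg Z x = 0 := by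
        by_cases hx : x ∈ tsupport v
        · rw [hZ0 x hx, mul_zero]
        · rw [image_eq_zero_of_notMem_tsupport hx, zero_mul]
      rw [Pi.add_apply, add_mul, this, add_zero, hZd]
      ring
    simp only [e1]
    rw [integral_const_mul, integral_sub (integrable_mul_divg hu1 hzC1 hzc)
      (integrable_mul_divg hu1 hy hyc)]
    refine mul_le_mul_of_nonneg_left ?_ hb.le
    linarith
  have hlim : Tendsto (fun δ : ℝ => ENNReal.ofReal ((1 + c * δ)⁻¹ * (τ - δ - c * δ * T))) (𝓝[>] 0)
      (𝓝 (ENNReal.ofReal τ)) := by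
    refine (ENNReal.continuous_ofReal.tendsto _).comp ?_
    refine Tendsto.mono_left ?_ nhdsWithin_le_nhds
    have : ContinuousAt (fun δ : ℝ => (1 + c * δ)⁻¹ * (τ - δ - c * δ * T)) 0 := by
      refine ContinuousAt.mul (ContinuousAt.inv₀ (by fun_prop) (by simp)) (by fun_prop)
    simpa [ContinuousAt] using this
  exact le_of_tendsto hlim (by filter_upwards [self_mem_nhdsWithin] with δ hδ using key δ hδ)

theorem least_gradient_of_superlevel_sets {N : ℕ} (Ω : Set (Euc N)) (hΩ : IsOpen Ω)
    (u : Euc N → ℝ) (hu1 : IntegrableOn u Ω volume) (hu2 : TV Ω u ≠ ⊤)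
    (h : ∀ᵐ t ∂(volume : Measure ℝ),
      IsLeastGradient Ω ({x | t < u x}.indicator (fun _ => (1:ℝ)))) :
    IsLeastGradient Ω u := by
  intro v hv hvt
  rcases Nat.eq_zero_or_pos N with rfl | hN
  · rw [TV_le_iff]
    intro z _ _ _ _
    have : ∀ x, divg z x = 0 := fun x => by simp [divg]
    simp [this]
  · refine le_of_forall_lt_imp_le_of_dense fun a ha => ?_
    have hat : a ≠ ⊤ := (ha.trans_le le_top).ne
    rw [← ENNReal.ofReal_toReal hat] at ha ⊢
    rcases (ENNReal.toReal_nonneg (a := a)).eq_or_lt with h0 | h0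
    · rw [← h0]; simp
    · exact partC hN Ω hΩ u hu1 hu2 h v hv hvt h0 ha
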